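/- arXiv:1602.02011 — 10 statements merged into one kernel-verified Lean document; each statement's English description precedes it below -/
import Mathlib

section
/- For every α > 0 and all real numbers s, t with 0 ≤ s ≤ t, the double integral of the Ornstein–Uhlenbeck covariance kernel satisfies ∫₀ˢ ∫₀ᵗ α² e^{-α max(u,v)} cosh(α min(u,v)) dv du = α s − e^{-α t} sinh(α s). (This identifies the covariance function of the integrated Ornstein–Uhlenbeck process X̄_t = ∫₀ᵗ X_s ds as the Wilson H-function.) -/
/-!
For `0 ≤ u ≤ t`, splitting the inner integral at the diagonal `v = u` gives
`α e^{-αu} sinh(αu) + α cosh(αu) (e^{-αu} - e^{-αt})`, which collapses to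
`α - α e^{-αt} cosh(αu)` because `cosh + sinh = exp`. Integrating this in `u` over `[0, s]` gives
the Wilson H-function.
-/

/-- The Ornstein–Uhlenbeck covariance kernel `K(s,t) = α² e^{-α max(s,t)} cosh(α min(s,t))`. -/
noncomputable def Kker (α s t : ℝ) : ℝ :=
  α ^ 2 * Real.exp (-(α * max s t)) * Real.cosh (α * min s t)

theorem integral_cosh_mul (α s : ℝ) :
    (∫ v in (0:ℝ)..s, α * Real.cosh (α * v)) = Real.sinh (α * s) := by
  have h : ∀ v ∈ Set.uIcc 0 s,
      HasDerivAt (fun v => Real.sinh (α * v)) (α * Real.cosh (α * v)) v := by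
    intro v _
    have := ((hasDerivAt_id v).const_mul α).sinh
    simpa [mul_comm] using this
  rw [intervalIntegral.integral_eq_sub_of_hasDerivAt h
    (Continuous.intervalIntegrable (by fun_prop) _ _)]
  simp

theorem integral_exp_neg_mul (α u t : ℝ) :
    (∫ v in u..t, α * Real.exp (-(α * v))) = Real.exp (-(α * u)) - Real.exp (-(α * t)) := by
  have h : ∀ v ∈ Set.uIcc u t,
      HasDerivAt (fun v => -Real.exp (-(α * v))) (α * Real.exp (-(α * v))) v := by
    intro v _
    have := (((hasDerivAt_id v).const_mul α).fun_neg.exp).fun_neg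
    simpa [mul_comm] using this
  rw [intervalIntegral.integral_eq_sub_of_hasDerivAt h
    (Continuous.intervalIntegrable (by fun_prop) _ _)]
  ring

theorem integral_Kker (α u t : ℝ) (hu : 0 ≤ u) (hut : u ≤ t) :
    (∫ v in (0:ℝ)..t, Kker α u v)
      = α - Real.exp (-(α * t)) * (α * Real.cosh (α * u)) := by
  have hc : Continuous (fun v => Kker α u v) := by
    unfold Kker
    fun_prop
  rw [← intervalIntegral.integral_add_adjacent_intervals
    (hc.intervalIntegrable 0 u) (hc.intervalIntegrable u t)]
  have below : (∫ v in (0:ℝ)..u, Kker α u v)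
      = α * Real.exp (-(α * u)) * Real.sinh (α * u) := by
    rw [← integral_cosh_mul, ← intervalIntegral.integral_const_mul]
    refine intervalIntegral.integral_congr fun v hv => ?_
    rw [Set.uIcc_of_le hu] at hv
    simp only [Kker, max_eq_left hv.2, min_eq_right hv.2]
    ring
  have above : (∫ v in u..t, Kker α u v)
      = α * Real.cosh (α * u) * (Real.exp (-(α * u)) - Real.exp (-(α * t))) := by
    rw [← integral_exp_neg_mul, ← intervalIntegral.integral_const_mul]
    refine intervalIntegral.integral_congr fun v hv => ?_
    rw [Set.uIcc_of_le hut] at hv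
    simp only [Kker, max_eq_right hv.1, min_eq_left hv.1]
    ring
  have cancel : Real.exp (-(α * u)) * (Real.cosh (α * u) + Real.sinh (α * u)) = 1 := by
    rw [Real.cosh_add_sinh, ← Real.exp_add, neg_add_cancel, Real.exp_zero]
  rw [below, above]
  linear_combination α * cancel

/-- For `α > 0` and `0 ≤ s ≤ t`, the double integral of the Ornstein–Uhlenbeck covariance
kernel over `[0,s] × [0,t]` equals the Wilson H-function `α s − e^{-α t} sinh(α s)`. -/
theorem double_integral_OU_kernel_eq_wilson_H (α s t : ℝ) (hα : 0 < α)
    (hs : 0 ≤ s) (hst : s ≤ t) :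
    (∫ u in (0:ℝ)..s, ∫ v in (0:ℝ)..t, Kker α u v)
      = α * s - Real.exp (-(α * t)) * Real.sinh (α * s) := by
  have inner : Set.EqOn (fun u => ∫ v in (0:ℝ)..t, Kker α u v)
      (fun u => α - Real.exp (-(α * t)) * (α * Real.cosh (α * u))) (Set.uIcc 0 s) := by
    intro u hu
    rw [Set.uIcc_of_le hs] at hu
    exact integral_Kker α u t hu.1 (hu.2.trans hst)
  rw [intervalIntegral.integral_congr inner, intervalIntegral.integral_sub
    (by simp) (Continuous.intervalIntegrable (by fun_prop) _ _),
    intervalIntegral.integral_const_mul, integral_cosh_mul]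
  simp [mul_comm]
end

section
/- For every α > 0, the kernel K(s,t) := α² e^{-α max(s,t)} cosh(α min(s,t)) on [0,∞) × [0,∞) is totally positive: for every n ≥ 1 and all points 0 ≤ s₁ < s₂ < ⋯ < sₙ and 0 ≤ t₁ < t₂ < ⋯ < tₙ, the determinant of the n×n matrix with entries K(sᵢ, tⱼ) is nonnegative. -/
/-- The inductive step for `det_min_nonneg` in the case where row `0` is constant. -/
lemma det_min_nonneg_step (n : ℕ)
    (ih : ∀ a b : Fin n → ℝ, Monotone a → Monotone b → (∀ i, 0 ≤ a i) → (∀ i, 0 ≤ b i) →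
      0 ≤ (Matrix.of fun i j => min (a i) (b j)).det)
    (a b : Fin (n + 1) → ℝ) (ha : Monotone a) (hb : Monotone b) (ha0 : 0 ≤ a 0)
    (hab : a 0 ≤ b 0) :
    0 ≤ (Matrix.of fun i j => min (a i) (b j)).det := by
  have hcol : (Matrix.of fun i j => min (a i) (b j)).det =
      (Matrix.of fun i j : Fin (n + 1) =>
        if j = 0 then min (a i) (b 0) else min (a i) (b j) - min (a i) (b 0)).det := by
    rw [← Matrix.det_transpose, ← Matrix.det_transpose (Matrix.of fun i j : Fin (n + 1) => ite _ _ _)]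
    refine Matrix.det_eq_of_forall_row_eq_smul_add_const
      (fun j => if j = 0 then 0 else 1) 0 (by simp) ?_
    intro j i
    by_cases hj : j = 0 <;> simp [hj]
  have hrow (j : Fin (n + 1)) : min (a 0) (b j) = a 0 :=
    min_eq_left (hab.trans (hb (Fin.zero_le j)))
  rw [hcol, Matrix.det_succ_row_zero, Fin.sum_univ_succ]
  simp only [Matrix.of_apply, hrow, Fin.succ_ne_zero, if_true, if_false, sub_self, mul_zero,
    zero_mul, Finset.sum_const_zero, add_zero, Fin.val_zero, pow_zero, one_mul]
  refine mul_nonneg ha0 ?_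
  have hminor : (Matrix.of fun i j : Fin (n + 1) =>
      if j = 0 then min (a i) (b 0) else min (a i) (b j) - min (a i) (b 0)).submatrix Fin.succ
        (Fin.succAbove 0) =
      Matrix.of fun i j : Fin n => min (max (a i.succ - b 0) 0) (b j.succ - b 0) := by
    ext i j
    have := hb (Fin.zero_le j.succ)
    simp only [Matrix.submatrix_apply, Matrix.of_apply, Fin.succAbove_zero, Fin.succ_ne_zero,
      if_false]
    grind
  rw [hminor]
  apply ih (fun i => max (a i.succ - b 0) 0) (fun j => b j.succ - b 0)
  · intro i j hij
    have := ha (Fin.succ_le_succ_iff.2 hij)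
    exact max_le_max (by linarith) le_rfl
  · intro i j hij
    have := hb (Fin.succ_le_succ_iff.2 hij)
    simpa using this
  · exact fun i => le_max_right _ _
  · exact fun j => sub_nonneg.2 (hb (Fin.zero_le _))

lemma det_min_nonneg (n : ℕ) : ∀ a b : Fin n → ℝ, Monotone a → Monotone b →
    (∀ i, 0 ≤ a i) → (∀ i, 0 ≤ b i) → 0 ≤ (Matrix.of fun i j => min (a i) (b j)).det := by
  induction n with
  | zero => intros; simp
  | succ n ih =>
    intro a b ha hb ha0 hb0
    rcases le_total (a 0) (b 0) with h | h
    · exact det_min_nonneg_step n ih a b ha hb (ha0 0) h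
    · have key := det_min_nonneg_step n ih b a hb ha (hb0 0) h
      rw [← Matrix.det_transpose] at key
      convert key using 2
      ext i j
      simp [min_comm]

/-- The increasing function `g(x) = α² (e^{2αx} + 1) / 2 = α² e^{αx} cosh(αx)`. -/
noncomputable def ouScale (α x : ℝ) : ℝ := α ^ 2 * ((Real.exp (2 * (α * x)) + 1) / 2)

lemma ouScale_mono {α : ℝ} (hα : 0 < α) : Monotone (ouScale α) := by
  intro x y h
  unfold ouScale
  gcongr

lemma exp_mul_exp_mul_ouScale (α s t : ℝ) :
    Real.exp (-(α * s)) * Real.exp (-(α * t)) * ouScale α s =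
      α ^ 2 * Real.exp (-(α * t)) * Real.cosh (α * s) := by
  have h : Real.exp (α * s) ≠ 0 := (Real.exp_pos _).ne'
  rw [ouScale, Real.cosh_eq, two_mul (α * s), Real.exp_add, Real.exp_neg (α * s)]
  field_simp

lemma Kker_eq {α : ℝ} (hα : 0 < α) (s t : ℝ) :
    Kker α s t =
      Real.exp (-(α * s)) * (Real.exp (-(α * t)) * min (ouScale α s) (ouScale α t)) := by
  unfold Kker
  rcases le_total s t with h | h
  · rw [max_eq_right h, min_eq_left h, min_eq_left (ouScale_mono hα h),
      ← exp_mul_exp_mul_ouScale]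
    ring
  · rw [max_eq_left h, min_eq_right h, min_eq_right (ouScale_mono hα h),
      ← exp_mul_exp_mul_ouScale]
    ring

/-- The Ornstein–Uhlenbeck covariance kernel is totally positive: for every `n ≥ 1` and all
increasing sequences `0 ≤ s₁ < ⋯ < sₙ` and `0 ≤ t₁ < ⋯ < tₙ`, the determinant of the matrix
`(K(sᵢ, tⱼ))ᵢⱼ` is nonnegative. -/
theorem OU_kernel_totally_positive (α : ℝ) (hα : 0 < α) (n : ℕ) (hn : 1 ≤ n)
    (s t : Fin n → ℝ) (hs0 : ∀ i, 0 ≤ s i) (ht0 : ∀ i, 0 ≤ t i)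
    (hs : StrictMono s) (ht : StrictMono t) :
    0 ≤ (Matrix.of fun i j : Fin n => Kker α (s i) (t j)).det := by
  have hfac : (Matrix.of fun i j : Fin n => Kker α (s i) (t j)).det =
      (∏ i, Real.exp (-(α * s i))) * ((∏ j, Real.exp (-(α * t j))) *
        (Matrix.of fun i j : Fin n => min (ouScale α (s i)) (ouScale α (t j))).det) := by
    rw [← Matrix.det_mul_row, ← Matrix.det_mul_column]
    congr 1
    ext i j
    simp [Kker_eq hα]
  have hnonneg (x : ℝ) : 0 ≤ ouScale α x := by
    unfold ouScale
    positivity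
  have hmin := det_min_nonneg n (fun i => ouScale α (s i)) (fun j => ouScale α (t j))
    ((ouScale_mono hα).comp hs.monotone) ((ouScale_mono hα).comp ht.monotone)
    (fun i => hnonneg _) (fun j => hnonneg _)
  rw [hfac]
  positivity
end

section
/- Let s₁ < s₂ < ⋯ < sₙ and t₁ < t₂ < ⋯ < tₙ be real numbers, and let L be the n×n matrix with entries Lᵢⱼ = 1 if sᵢ ≥ tⱼ and Lᵢⱼ = 0 otherwise. Then det L = 1 if the interlacing condition t₁ ≤ s₁ < t₂ ≤ s₂ < ⋯ < tₙ ≤ sₙ holds, and det L = 0 otherwise. -/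
/-!
Under interlacing the matrix is lower triangular with ones on the diagonal, so its determinant
is `1`. Conversely suppose the determinant is nonzero. Each row is the indicator of an initial
segment of the columns; no row vanishes, so row `i` has a last nonzero column `f i`, and
`t j ≤ s i ↔ j ≤ f i`. The map `f` is monotone because `s` is, and injective because no two rows
agree. A strictly monotone self-map of `Fin n` is the identity, and `f = id` says exactly
that `s` and `t` interlace.
-/

/-- Determinants of matrices sampled from the indicator kernel `L(s,t) = 1{s ≥ t}` at
increasing sequences: `det L = 1` if the interlacing condition
`t₁ ≤ s₁ < t₂ ≤ s₂ < ⋯ < tₙ ≤ sₙ` holds, and `det L = 0` otherwise. -/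
theorem det_lower_indicator_kernel (n : ℕ) (s t : Fin n → ℝ)
    (hs : StrictMono s) (ht : StrictMono t) :
    (((∀ i : Fin n, t i ≤ s i) ∧
        (∀ (i : Fin n) (h : (i : ℕ) + 1 < n), s i < t ⟨(i : ℕ) + 1, h⟩)) →
      (Matrix.of fun i j : Fin n => if t j ≤ s i then (1 : ℝ) else 0).det = 1) ∧
    (¬ ((∀ i : Fin n, t i ≤ s i) ∧
        (∀ (i : Fin n) (h : (i : ℕ) + 1 < n), s i < t ⟨(i : ℕ) + 1, h⟩)) →
      (Matrix.of fun i j : Fin n => if t j ≤ s i then (1 : ℝ) else 0).det = 0) := by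
  constructor
  · rintro ⟨h1, h2⟩
    rw [Matrix.det_of_isLowerTriangular]
    · simp [h1]
    · intro i j hij
      have hij' : (i : ℕ) < j := hij
      have hlt : s i < t j := lt_of_lt_of_le (h2 i (by omega))
        (ht.monotone (Fin.mk_le_of_le_val (by omega)))
      simp [hlt]
  · intro h
    by_contra hdet
    apply h
    -- Since `det ≠ 0`, every row has a nonzero entry, hence a last one.
    have hex : ∀ i, ∃ m, ∀ j, t j ≤ s i ↔ j ≤ m := by
      intro i
      have hne : (Finset.univ.filter fun j => t j ≤ s i).Nonempty := by
        by_contra hemp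
        rw [Finset.not_nonempty_iff_eq_empty, Finset.filter_eq_empty_iff] at hemp
        refine hdet (Matrix.det_eq_zero_of_row_eq_zero i fun j => ?_)
        simp [hemp (Finset.mem_univ j)]
      refine ⟨Finset.max' _ hne, fun j => ⟨fun hj => Finset.le_max' _ _ (by simpa using hj),
        fun hj => (ht.monotone hj).trans ?_⟩⟩
      exact (Finset.mem_filter.1 (Finset.max'_mem _ hne)).2
    choose f hf using hex
    have hmono : Monotone f := fun i j hij =>
      (hf j _).1 (((hf i _).2 le_rfl).trans (hs.monotone hij))
    have hinj : Function.Injective f := by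
      intro i j hij
      by_contra hne
      refine hdet (Matrix.det_zero_of_row_eq hne ?_)
      funext k
      simp [hf, hij]
    have hstrict : StrictMono f := hmono.strictMono_of_injective hinj
    have hid : ∀ i, f i = i := fun i => le_antisymm hstrict.apply_le hstrict.le_apply
    refine ⟨fun i => (hf i i).2 (hid i).ge, fun i hi => lt_of_not_ge fun hle => ?_⟩
    have hcontra := (hf i _).1 hle
    rw [hid i, Fin.le_def] at hcontra
    simp at hcontra
end

section
/- Let s₁ < s₂ < ⋯ < sₙ and t₁ < t₂ < ⋯ < tₙ be real numbers, and let R be the n×n matrix with entries Rᵢⱼ = 1 if sᵢ ≤ tⱼ and Rᵢⱼ = 0 otherwise. Then det R = 1 if the interlacing condition s₁ ≤ t₁ < s₂ ≤ t₂ < ⋯ < sₙ ≤ tₙ holds, and det R = 0 otherwise. -/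
/-!
Under interlacing, `R` is upper triangular with unit diagonal, so `det R = 1`. Conversely suppose
`det R ≠ 0`. Each row of `R` is the indicator of an up-set of `Fin n`, nonempty because no row
vanishes, hence of the form `{j | f i ≤ j}`. The map `f` is monotone because `s` is, and injective
because no two rows agree. A strictly monotone self-map of `Fin n` is the identity, so
`s i ≤ t j ↔ i ≤ j`, which contains the interlacing condition.
-/

/-- Determinants of matrices sampled from the indicator kernel `R(s,t) = 1{s ≤ t}` at
increasing sequences: `det R = 1` if the interlacing condition
`s₁ ≤ t₁ < s₂ ≤ t₂ < ⋯ < sₙ ≤ tₙ` holds, and `det R = 0` otherwise. -/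
theorem det_upper_indicator_kernel (n : ℕ) (s t : Fin n → ℝ)
    (hs : StrictMono s) (ht : StrictMono t) :
    (((∀ i : Fin n, s i ≤ t i) ∧
        (∀ (i : Fin n) (h : (i : ℕ) + 1 < n), t i < s ⟨(i : ℕ) + 1, h⟩)) →
      (Matrix.of fun i j : Fin n => if s i ≤ t j then (1 : ℝ) else 0).det = 1) ∧
    (¬ ((∀ i : Fin n, s i ≤ t i) ∧
        (∀ (i : Fin n) (h : (i : ℕ) + 1 < n), t i < s ⟨(i : ℕ) + 1, h⟩)) →
      (Matrix.of fun i j : Fin n => if s i ≤ t j then (1 : ℝ) else 0).det = 0) := by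
  refine ⟨fun ⟨h1, h2⟩ => ?_, fun hne => ?_⟩
  · rw [Matrix.det_of_isUpperTriangular]
    · simp [h1]
    · intro i j hij
      have hji : (j : ℕ) < i := hij
      have hlt : t j < s i :=
        (h2 j (by omega)).trans_le (hs.monotone (Fin.mk_le_of_le_val (by omega)))
      simp [hlt]
  · by_contra hdet
    have hrow : ∀ i, ∃ k, ∀ j, s i ≤ t j ↔ k ≤ j := by
      intro i
      have hex : ∃ j, s i ≤ t j := by
        by_contra! hall
        exact hdet (Matrix.det_eq_zero_of_row_eq_zero i fun j => by simp [hall j])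
      obtain ⟨k, hk, hmin⟩ := wellFounded_lt.has_min {j | s i ≤ t j} hex
      exact ⟨k, fun j => ⟨fun hj => not_lt.mp (hmin j hj),
        fun hkj => le_trans hk (ht.monotone hkj)⟩⟩
    choose f hf using hrow
    have hmono : Monotone f := fun i i' hii' =>
      (hf i _).mp ((hs.monotone hii').trans ((hf i' _).mpr le_rfl))
    have hinj : Function.Injective f := by
      intro i i' hii'
      by_contra hne'
      refine hdet (Matrix.det_zero_of_row_eq hne' ?_)
      ext j
      simp [hf, hii']
    have hstrict : StrictMono f := hmono.strictMono_of_injective hinj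
    have hid : ∀ i, f i = i := fun i => le_antisymm (hstrict.le_id i) (hstrict.id_le i)
    refine hne ⟨fun i => (hf i i).mpr (hid i).le, fun i h => ?_⟩
    rw [← not_le, hf, hid, not_le]
    exact Fin.lt_def.mpr (Nat.lt_succ_self _)
end

section
/- For every α > 0, every n ≥ 1, and all points 0 < u₁ < u₂ < ⋯ < uₙ, the n×n matrix with entries H(uᵢ, uⱼ) = α min(uᵢ,uⱼ) − e^{-α max(uᵢ,uⱼ)} sinh(α min(uᵢ,uⱼ)) is symmetric positive definite; in particular it is invertible and its determinant is strictly positive. -/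
/-!
The kernel is the covariance of an integrated Ornstein–Uhlenbeck process, and writing that
process as a Wiener integral gives, for `0 ≤ s, t ≤ T`,
`H(s,t) = (1 - e^{-αs})(1 - e^{-αt}) + α ∫₀ᵀ k_s(r) k_t(r) dr`, with
`k_s(r) = 1 - e^{-α max(s - r, 0)}` (`Hker_eq_integral`). Hence the quadratic form of the matrix
at `x` is a square plus `α ∫₀ᵀ (∑ᵢ xᵢ k_{uᵢ}(r))² dr` (`quadForm_eq`). The integrand is continuous,
and `k_s(r)` vanishes exactly for `r ≥ s`. If `m` is the largest index with `x_m ≠ 0`, then at a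
point `r ≥ 0` with `u_i ≤ r < u_m` for all `i < m` the sum reduces to `x_m k_{u_m}(r) ≠ 0`, so the
integral is strictly positive.
-/

/-- The Wilson H-function `H(s,t) = α min(s,t) − e^{-α max(s,t)} sinh(α min(s,t))`. -/
noncomputable def Hker (α s t : ℝ) : ℝ :=
  α * min s t - Real.exp (-(α * max s t)) * Real.sinh (α * min s t)

/-- The Wiener-integral kernel of the integrated Ornstein–Uhlenbeck process at time `s`
(up to the factor `√α`), extended by zero to `r ≥ s`. -/
noncomputable def wienerKer (α s r : ℝ) : ℝ := 1 - Real.exp (-(α * max (s - r) 0))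

lemma continuous_wienerKer (α s : ℝ) : Continuous (wienerKer α s) := by
  unfold wienerKer
  fun_prop

lemma wienerKer_of_le {α s r : ℝ} (h : s ≤ r) : wienerKer α s r = 0 := by
  simp [wienerKer, max_eq_right (sub_nonpos.2 h)]

lemma wienerKer_of_ge {α s r : ℝ} (h : r ≤ s) :
    wienerKer α s r = 1 - Real.exp (-(α * (s - r))) := by
  simp [wienerKer, max_eq_left (sub_nonneg.2 h)]

lemma wienerKer_pos {α s r : ℝ} (hα : 0 < α) (h : r < s) : 0 < wienerKer α s r := by
  rw [wienerKer_of_ge h.le, sub_pos, Real.exp_lt_one_iff]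
  have := mul_pos hα (sub_pos.2 h)
  linarith

lemma Hker_comm (α s t : ℝ) : Hker α s t = Hker α t s := by
  simp only [Hker, min_comm s t, max_comm s t]

lemma integral_wienerKer_mul {α s t : ℝ} (hs : 0 ≤ s) (hst : s ≤ t) :
    ∫ r in (0 : ℝ)..s, α * (wienerKer α s r * wienerKer α t r) =
      Hker α s t - (1 - Real.exp (-(α * s))) * (1 - Real.exp (-(α * t))) := by
  -- On `[0, s]` the integrand is a combination of exponentials with an explicit primitive.
  have hcongr : ∫ r in (0 : ℝ)..s, α * (wienerKer α s r * wienerKer α t r) =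
      ∫ r in (0 : ℝ)..s,
        α * ((1 - Real.exp (-(α * (s - r)))) * (1 - Real.exp (-(α * (t - r))))) := by
    refine intervalIntegral.integral_congr fun r hr => ?_
    rw [Set.uIcc_of_le hs] at hr
    simp only [wienerKer_of_ge hr.2, wienerKer_of_ge (hr.2.trans hst)]
  have hderiv : ∀ r : ℝ, HasDerivAt
      (fun r : ℝ => α * r - Real.exp (-(α * (s - r))) - Real.exp (-(α * (t - r)))
        + Real.exp (-(α * (s - r))) * Real.exp (-(α * (t - r))) / 2)
      (α * ((1 - Real.exp (-(α * (s - r)))) * (1 - Real.exp (-(α * (t - r)))))) r := by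
    intro r
    have he : ∀ c : ℝ, HasDerivAt (fun r : ℝ => Real.exp (-(α * (c - r))))
        (Real.exp (-(α * (c - r))) * α) r := by
      intro c
      have := ((((hasDerivAt_id r).const_sub c).const_mul α).neg).exp
      simpa using this
    have := ((((hasDerivAt_id' r).const_mul α).sub (he s)).sub (he t)).add
      (((he s).mul (he t)).div_const 2)
    refine this.congr_deriv ?_
    ring
  rw [hcongr, intervalIntegral.integral_eq_sub_of_hasDerivAt (fun r _ => hderiv r)
    (Continuous.intervalIntegrable (by fun_prop) _ _)]
  have h1 : Real.exp (-(α * (t - s))) = Real.exp (-(α * t)) * Real.exp (α * s) := by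
    rw [← Real.exp_add]; ring_nf
  simp only [Hker, min_eq_left hst, max_eq_right hst, Real.sinh_eq, h1, sub_self, sub_zero,
    mul_zero, neg_zero, Real.exp_zero]
  ring

lemma Hker_eq_integral_of_le {α s t T : ℝ} (hs : 0 ≤ s) (hst : s ≤ t) (hsT : s ≤ T) :
    Hker α s t = (1 - Real.exp (-(α * s))) * (1 - Real.exp (-(α * t))) +
      ∫ r in (0 : ℝ)..T, α * (wienerKer α s r * wienerKer α t r) := by
  have hc : Continuous fun r => α * (wienerKer α s r * wienerKer α t r) :=
    continuous_const.mul ((continuous_wienerKer α s).mul (continuous_wienerKer α t))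
  have h0 : ∫ r in s..T, α * (wienerKer α s r * wienerKer α t r) = 0 := by
    rw [intervalIntegral.integral_congr (g := fun _ => 0), intervalIntegral.integral_zero]
    intro r hr
    rw [Set.uIcc_of_le hsT] at hr
    simp [wienerKer_of_le hr.1]
  rw [← intervalIntegral.integral_add_adjacent_intervals (hc.intervalIntegrable 0 s)
    (hc.intervalIntegrable s T), h0, integral_wienerKer_mul hs hst]
  ring

lemma Hker_eq_integral {α s t T : ℝ} (hs : 0 ≤ s) (ht : 0 ≤ t) (hsT : s ≤ T) (htT : t ≤ T) :
    Hker α s t = (1 - Real.exp (-(α * s))) * (1 - Real.exp (-(α * t))) +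
      ∫ r in (0 : ℝ)..T, α * (wienerKer α s r * wienerKer α t r) := by
  rcases le_total s t with h | h
  · exact Hker_eq_integral_of_le hs h hsT
  · rw [Hker_comm, Hker_eq_integral_of_le ht h htT, mul_comm (1 - Real.exp (-(α * t)))]
    simp only [mul_comm (wienerKer α t _)]

lemma quadForm_eq {ι : Type*} [Fintype ι] (α T : ℝ) (u x : ι → ℝ) (hu0 : ∀ i, 0 ≤ u i)
    (huT : ∀ i, u i ≤ T) :
    ∑ i, ∑ j, x i * x j * Hker α (u i) (u j) =
      (∑ i, x i * (1 - Real.exp (-(α * u i)))) ^ 2 +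
        ∫ r in (0 : ℝ)..T, α * (∑ i, x i * wienerKer α (u i) r) ^ 2 := by
  have hc : ∀ i j, Continuous fun r =>
      x i * x j * (α * (wienerKer α (u i) r * wienerKer α (u j) r)) := fun i j =>
    continuous_const.mul (continuous_const.mul
      ((continuous_wienerKer α (u i)).mul (continuous_wienerKer α (u j))))
  have hint : ∫ r in (0 : ℝ)..T, α * (∑ i, x i * wienerKer α (u i) r) ^ 2 =
      ∑ i, ∑ j, x i * x j *
        ∫ r in (0 : ℝ)..T, α * (wienerKer α (u i) r * wienerKer α (u j) r) := by
    simp only [← intervalIntegral.integral_const_mul (x _ * x _)]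
    simp only [← intervalIntegral.integral_finsetSum
      fun j _ => (hc _ j).intervalIntegrable 0 T]
    rw [← intervalIntegral.integral_finsetSum fun i _ =>
      (continuous_finsetSum _ fun j _ => hc i j).intervalIntegrable 0 T]
    congr 1
    funext r
    rw [sq, Finset.sum_mul_sum, Finset.mul_sum]
    refine Finset.sum_congr rfl fun i _ => ?_
    rw [Finset.mul_sum]
    exact Finset.sum_congr rfl fun j _ => by ring
  rw [hint, sq, Finset.sum_mul_sum, ← Finset.sum_add_distrib]
  refine Finset.sum_congr rfl fun i _ => ?_
  rw [← Finset.sum_add_distrib]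
  refine Finset.sum_congr rfl fun j _ => ?_
  rw [Hker_eq_integral (hu0 i) (hu0 j) (huT i) (huT j)]
  ring

lemma exists_wienerKer_sum_ne_zero {α : ℝ} (hα : 0 < α) {n : ℕ} {u x : Fin n → ℝ}
    (hu0 : ∀ i, 0 < u i) (hu : StrictMono u) (hx : x ≠ 0) :
    ∃ c, 0 ≤ c ∧ (∃ m, c < u m) ∧ ∑ i, x i * wienerKer α (u i) c ≠ 0 := by
  obtain ⟨i₀, hi₀⟩ := Function.ne_iff.1 hx
  obtain ⟨m, hm, hmax⟩ := (Finset.univ.filter fun i => x i ≠ 0).exists_max_image id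
    ⟨i₀, by simpa using hi₀⟩
  replace hm : x m ≠ 0 := by simpa using hm
  -- The point `c` is the predecessor of `u m` among `0` and the points `u i`.
  let S : Finset ℝ := insert 0 ((Finset.Iio m).image u)
  have hS : S.Nonempty := Finset.insert_nonempty _ _
  have hlt : S.max' hS < u m := by
    rw [Finset.max'_lt_iff]
    intro y hy
    rcases Finset.mem_insert.1 hy with rfl | hy
    · exact hu0 m
    · obtain ⟨i, hi, rfl⟩ := Finset.mem_image.1 hy
      exact hu (Finset.mem_Iio.1 hi)
  refine ⟨S.max' hS, S.le_max' _ (Finset.mem_insert_self _ _), ⟨m, hlt⟩, ?_⟩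
  rw [Finset.sum_eq_single m]
  · exact mul_ne_zero hm (wienerKer_pos hα hlt).ne'
  · intro i _ him
    rcases lt_or_gt_of_ne him with h | h
    · rw [wienerKer_of_le, mul_zero]
      exact S.le_max' _ (Finset.mem_insert_of_mem
        (Finset.mem_image_of_mem u (Finset.mem_Iio.2 h)))
    · have : x i = 0 := by
        by_contra hxi
        exact absurd (hmax i (by simpa using hxi)) (not_le.2 h)
      rw [this, zero_mul]
  · simp

lemma quadForm_pos {α : ℝ} (hα : 0 < α) {n : ℕ} {u x : Fin n → ℝ}
    (hu0 : ∀ i, 0 < u i) (hu : StrictMono u) (hx : x ≠ 0) :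
    0 < ∑ i, ∑ j, x i * x j * Hker α (u i) (u j) := by
  obtain ⟨c, hc0, ⟨m, hcm⟩, hc⟩ := exists_wienerKer_sum_ne_zero hα hu0 hu hx
  have huT : ∀ i, u i ≤ ∑ j, u j := fun i =>
    Finset.single_le_sum (fun j _ => (hu0 j).le) (Finset.mem_univ i)
  rw [quadForm_eq α (∑ j, u j) u x (fun i => (hu0 i).le) huT]
  refine add_pos_of_nonneg_of_pos (sq_nonneg _) ?_
  refine intervalIntegral.integral_pos ((hu0 m).trans_le (huT m)) ?_
    (fun r _ => by positivity) ⟨c, ⟨hc0, hcm.le.trans (huT m)⟩, by positivity⟩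
  exact (continuous_const.mul ((continuous_finsetSum _ fun i _ =>
    continuous_const.mul (continuous_wienerKer α (u i))).pow 2)).continuousOn

/-- For `α > 0`, `n ≥ 1` and points `0 < u₁ < ⋯ < uₙ`, the matrix `(H(uᵢ,uⱼ))ᵢⱼ` is
symmetric positive definite; in particular it is invertible and its determinant is
strictly positive. -/
theorem wilson_H_matrix_posDef (α : ℝ) (hα : 0 < α) (n : ℕ) (hn : 1 ≤ n)
    (u : Fin n → ℝ) (hu0 : ∀ i, 0 < u i) (hu : StrictMono u) :
    (Matrix.of fun i j : Fin n => Hker α (u i) (u j)).IsSymm ∧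
    (Matrix.of fun i j : Fin n => Hker α (u i) (u j)).PosDef ∧
    IsUnit (Matrix.of fun i j : Fin n => Hker α (u i) (u j)).det ∧
    0 < (Matrix.of fun i j : Fin n => Hker α (u i) (u j)).det := by
  have hsymm : (Matrix.of fun i j : Fin n => Hker α (u i) (u j)).IsSymm :=
    Matrix.IsSymm.ext fun i j => Hker_comm α (u j) (u i)
  have hpos : (Matrix.of fun i j : Fin n => Hker α (u i) (u j)).PosDef := by
    refine Matrix.PosDef.of_dotProduct_mulVec_pos ?_ fun x hx => ?_
    · exact Matrix.IsHermitian.ext fun i j => by simpa using Hker_comm α (u j) (u i)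
    · refine (quadForm_pos hα hu0 hu hx).trans_eq ?_
      simp only [dotProduct, Matrix.mulVec, Matrix.of_apply, Pi.star_apply, star_trivial,
        Finset.mul_sum]
      exact Finset.sum_congr rfl fun i _ => Finset.sum_congr rfl fun j _ => by ring
  exact ⟨hsymm, hpos, hpos.det_pos.ne'.isUnit, hpos.det_pos⟩
end

section
/- For every α > 0, every ω ∈ ℝ, every n ≥ 1, and all points 0 < u₁ < u₂ < ⋯ < uₙ, the n×n matrix with entries W(uᵢ, uⱼ) = e^{-ω(uᵢ+uⱼ)} (α min(uᵢ,uⱼ) − e^{-α max(uᵢ,uⱼ)} sinh(α min(uᵢ,uⱼ))) is symmetric positive definite; in particular the linear system defining the Smith–Wilson method has a unique solution. -/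
/-!
The Wilson `H`-function is a Gram kernel. With `φ(y) = 1 - e^{-α max(y,0)}`,
`H(s,t) = φ(s) φ(t) + α ∫₀^M φ(s - x) φ(t - x) dx` for all `0 ≤ s, t ≤ M` (`wilson_gram`): the
integrand vanishes beyond `min(s,t)` and has an elementary antiderivative before it.

Hence for coefficients `c` the quadratic form `∑ᵢⱼ cᵢ cⱼ H(uᵢ,uⱼ)` is at least
`α ∫₀^M (∑ᵢ cᵢ φ(uᵢ - x))² dx`. If `c ≠ 0` and `k` is the last index with `cₖ ≠ 0`, then for `x`
slightly below `uₖ` only the `k`-th summand survives, so the continuous integrand is positive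
somewhere and the integral is positive (`wilson_H_form_pos`). The factor `e^{-ω(s+t)}` is
absorbed in the coefficients, and unique solvability follows from invertibility.
-/

/-- The Wilson kernel
`W(s,t) = e^{-ω(s+t)} (α min(s,t) − e^{-α max(s,t)} sinh(α min(s,t)))`. -/
noncomputable def Wker (α ω s t : ℝ) : ℝ :=
  Real.exp (-(ω * (s + t))) *
    (α * min s t - Real.exp (-(α * max s t)) * Real.sinh (α * min s t))

/-- The function `1 - e^{-α max(y,0)}`, whose translates generate the Wilson kernel. -/
noncomputable def wilsonPhi (α y : ℝ) : ℝ := 1 - Real.exp (-(α * max y 0))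

lemma wilsonPhi_continuous (α : ℝ) : Continuous (wilsonPhi α) := by
  unfold wilsonPhi; fun_prop

lemma wilsonPhi_of_nonpos {α y : ℝ} (hy : y ≤ 0) : wilsonPhi α y = 0 := by
  simp [wilsonPhi, max_eq_right hy]

lemma wilsonPhi_of_nonneg {α y : ℝ} (hy : 0 ≤ y) :
    wilsonPhi α y = 1 - Real.exp (-(α * y)) := by
  simp [wilsonPhi, max_eq_left hy]

lemma wilsonPhi_pos {α y : ℝ} (hα : 0 < α) (hy : 0 < y) : 0 < wilsonPhi α y := by
  rw [wilsonPhi_of_nonneg hy.le]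
  have : Real.exp (-(α * y)) < 1 := Real.exp_lt_one_iff.mpr (neg_lt_zero.mpr (mul_pos hα hy))
  linarith

lemma wilson_gram_of_le {α s t M : ℝ} (hα : 0 < α) (hs : 0 ≤ s) (hst : s ≤ t) (htM : t ≤ M) :
    α * s - Real.exp (-(α * t)) * Real.sinh (α * s) =
      wilsonPhi α s * wilsonPhi α t +
        α * ∫ x in (0 : ℝ)..M, wilsonPhi α (s - x) * wilsonPhi α (t - x) := by
  have hcont : Continuous fun x => wilsonPhi α (s - x) * wilsonPhi α (t - x) := by
    have := wilsonPhi_continuous α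
    fun_prop
  rw [← intervalIntegral.integral_add_adjacent_intervals
    (hcont.intervalIntegrable 0 s) (hcont.intervalIntegrable s M)]
  have htail : ∫ x in s..M, wilsonPhi α (s - x) * wilsonPhi α (t - x) = 0 := by
    apply intervalIntegral.integral_zero_ae
    refine Filter.Eventually.of_forall fun x hx => ?_
    rw [Set.uIoc_of_le (hst.trans htM)] at hx
    rw [wilsonPhi_of_nonpos (by linarith [hx.1]), zero_mul]
  have hhead : ∫ x in (0 : ℝ)..s, wilsonPhi α (s - x) * wilsonPhi α (t - x) =
      (s - Real.exp (-(α * (s - s))) / α - Real.exp (-(α * (t - s))) / α +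
        Real.exp (-(α * (s + t - 2 * s))) / (2 * α)) -
      (0 - Real.exp (-(α * (s - 0))) / α - Real.exp (-(α * (t - 0))) / α +
        Real.exp (-(α * (s + t - 2 * 0))) / (2 * α)) := by
    refine intervalIntegral.integral_eq_sub_of_hasDerivAt
      (f := fun x => x - Real.exp (-(α * (s - x))) / α - Real.exp (-(α * (t - x))) / α +
        Real.exp (-(α * (s + t - 2 * x))) / (2 * α)) (fun x hx => ?_)
      (hcont.intervalIntegrable 0 s)
    rw [Set.uIcc_of_le hs] at hx
    rw [wilsonPhi_of_nonneg (by linarith [hx.2]), wilsonPhi_of_nonneg (by linarith [hx.2])]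
    have h1 : ∀ a : ℝ, HasDerivAt (fun x => Real.exp (-(α * (a - x))) / α)
        (Real.exp (-(α * (a - x)))) x := fun a => by
      have := ((((hasDerivAt_id x).const_sub a).const_mul α).neg.exp).div_const α
      refine this.congr_deriv ?_
      simp; field_simp
    have h2 : HasDerivAt (fun x => Real.exp (-(α * (s + t - 2 * x))) / (2 * α))
        (Real.exp (-(α * (s + t - 2 * x)))) x := by
      have := (((((hasDerivAt_id x).const_mul 2).const_sub (s + t)).const_mul α).neg.exp).div_const
        (2 * α)
      refine this.congr_deriv ?_
      simp; field_simp
    refine ((((hasDerivAt_id x).sub (h1 s)).sub (h1 t)).add h2).congr_deriv ?_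
    have : Real.exp (-(α * (s + t - 2 * x))) =
        Real.exp (-(α * (s - x))) * Real.exp (-(α * (t - x))) := by
      rw [← Real.exp_add]; congr 1; ring
    rw [this]; ring
  rw [htail, hhead, wilsonPhi_of_nonneg hs, wilsonPhi_of_nonneg (hs.trans hst), Real.sinh_eq]
  have e1 : Real.exp (-(α * (s - s))) = 1 := by simp
  have e2 : Real.exp (-(α * (t - s))) = Real.exp (-(α * t)) * Real.exp (α * s) := by
    rw [← Real.exp_add]; congr 1; ring
  have e3 : Real.exp (-(α * (s + t - 2 * s))) = Real.exp (-(α * t)) * Real.exp (α * s) := by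
    rw [← Real.exp_add]; congr 1; ring
  have e4 : Real.exp (-(α * (s + t - 2 * 0))) = Real.exp (-(α * t)) * Real.exp (-(α * s)) := by
    rw [← Real.exp_add]; congr 1; ring
  rw [e1, e2, e3, e4, sub_zero, sub_zero]
  field_simp
  ring

lemma wilson_gram {α s t M : ℝ} (hα : 0 < α) (hs : 0 ≤ s) (ht : 0 ≤ t) (hsM : s ≤ M)
    (htM : t ≤ M) :
    α * min s t - Real.exp (-(α * max s t)) * Real.sinh (α * min s t) =
      wilsonPhi α s * wilsonPhi α t +
        α * ∫ x in (0 : ℝ)..M, wilsonPhi α (s - x) * wilsonPhi α (t - x) := by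
  rcases le_total s t with h | h
  · rw [min_eq_left h, max_eq_right h, wilson_gram_of_le hα hs h htM]
  · rw [min_eq_right h, max_eq_left h, wilson_gram_of_le hα ht h hsM]
    simp only [mul_comm]

/-- Just below the last node carrying a nonzero coefficient, the combination of translates of
`wilsonPhi` reduces to a single nonzero term. -/
lemma exists_wilsonPhi_sum_ne_zero {α : ℝ} (hα : 0 < α) {n : ℕ} {u : Fin n → ℝ}
    (hu0 : ∀ i, 0 < u i) (hu : StrictMono u) {c : Fin n → ℝ} (hc : c ≠ 0) :
    ∃ k x, 0 < x ∧ x < u k ∧ ∑ i, c i * wilsonPhi α (u i - x) ≠ 0 := by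
  obtain ⟨j, hj⟩ := Function.ne_iff.mp hc
  obtain ⟨k, hk, hmax⟩ := (Finset.univ.filter fun i => c i ≠ 0).exists_max_image id
    ⟨j, by simpa using hj⟩
  have hev : ∀ᶠ x in nhdsWithin (u k) (Set.Iio (u k)), ∀ i, i < k → u i < x :=
    Filter.eventually_all.mpr fun i => Filter.eventually_imp_distrib_left.mpr fun hi =>
      Filter.mem_of_superset (Ioo_mem_nhdsLT (hu hi)) fun x hx => hx.1
  obtain ⟨x, hx, hx'⟩ := (hev.and (Ioo_mem_nhdsLT (hu0 k))).exists
  refine ⟨k, x, hx'.1, hx'.2, ?_⟩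
  rw [Finset.sum_eq_single k]
  · exact mul_ne_zero (by simpa using hk) (wilsonPhi_pos hα (by linarith [hx'.2])).ne'
  · intro i _ hik
    rcases lt_or_gt_of_ne hik with h | h
    · rw [wilsonPhi_of_nonpos (by linarith [hx i h]), mul_zero]
    · have : c i = 0 := by
        by_contra h0
        exact absurd (hmax i (by simpa using h0)) (not_le.mpr h)
      rw [this, zero_mul]
  · simp

lemma wilson_H_form_pos {α : ℝ} (hα : 0 < α) {n : ℕ} {u : Fin n → ℝ}
    (hu0 : ∀ i, 0 < u i) (hu : StrictMono u) {c : Fin n → ℝ} (hc : c ≠ 0) :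
    0 < ∑ i, ∑ j, c i * c j * (α * min (u i) (u j) -
      Real.exp (-(α * max (u i) (u j))) * Real.sinh (α * min (u i) (u j))) := by
  obtain ⟨k, x, hx0, hxk, hx⟩ := exists_wilsonPhi_sum_ne_zero hα hu0 hu hc
  have hM : ∀ i, u i ≤ ∑ i, u i := fun i =>
    Finset.single_le_sum (fun j _ => (hu0 j).le) (Finset.mem_univ i)
  set M := ∑ i, u i
  have hφ := wilsonPhi_continuous α
  have hint : ∀ i j, IntervalIntegrable (fun x => c i * c j *
      (wilsonPhi α (u i - x) * wilsonPhi α (u j - x))) MeasureTheory.volume 0 M :=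
    fun i j => Continuous.intervalIntegrable (by fun_prop) 0 M
  have hpos : 0 < ∫ x in (0 : ℝ)..M, (∑ i, c i * wilsonPhi α (u i - x)) ^ 2 := by
    refine intervalIntegral.integral_pos (by linarith [hM k])
      (Continuous.continuousOn (by fun_prop)) (fun _ _ => sq_nonneg _)
      ⟨x, ⟨hx0.le, by linarith [hM k]⟩, by positivity⟩
  have hexp : ∫ x in (0 : ℝ)..M, (∑ i, c i * wilsonPhi α (u i - x)) ^ 2 =
      ∑ i, ∑ j, c i * c j *
        ∫ x in (0 : ℝ)..M, wilsonPhi α (u i - x) * wilsonPhi α (u j - x) := by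
    simp_rw [← intervalIntegral.integral_const_mul]
    simp_rw [← intervalIntegral.integral_finsetSum fun j _ => hint _ j]
    rw [← intervalIntegral.integral_finsetSum fun i _ =>
      Continuous.intervalIntegrable (by fun_prop) 0 M]
    refine intervalIntegral.integral_congr fun x _ => ?_
    simp only [sq, Finset.sum_mul_sum]
    exact Finset.sum_congr rfl fun i _ => Finset.sum_congr rfl fun j _ => by ring
  have hform : ∑ i, ∑ j, c i * c j * (α * min (u i) (u j) -
      Real.exp (-(α * max (u i) (u j))) * Real.sinh (α * min (u i) (u j))) =
      (∑ i, c i * wilsonPhi α (u i)) ^ 2 +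
        α * ∫ x in (0 : ℝ)..M, (∑ i, c i * wilsonPhi α (u i - x)) ^ 2 := by
    rw [hexp, sq, Finset.sum_mul_sum, Finset.mul_sum, ← Finset.sum_add_distrib]
    refine Finset.sum_congr rfl fun i _ => ?_
    rw [Finset.mul_sum, ← Finset.sum_add_distrib]
    refine Finset.sum_congr rfl fun j _ => ?_
    rw [wilson_gram hα (hu0 i).le (hu0 j).le (hM i) (hM j)]
    ring
  rw [hform]
  positivity

/-- For `α > 0`, `ω ∈ ℝ`, `n ≥ 1` and points `0 < u₁ < ⋯ < uₙ`, the matrix `(W(uᵢ,uⱼ))ᵢⱼ`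
is symmetric positive definite; in particular every linear system `W ζ = b` (as arises in
the Smith–Wilson method) has a unique solution. -/
theorem wilson_W_matrix_posDef (α ω : ℝ) (hα : 0 < α) (n : ℕ) (hn : 1 ≤ n)
    (u : Fin n → ℝ) (hu0 : ∀ i, 0 < u i) (hu : StrictMono u) :
    (Matrix.of fun i j : Fin n => Wker α ω (u i) (u j)).IsSymm ∧
    (Matrix.of fun i j : Fin n => Wker α ω (u i) (u j)).PosDef ∧
    ∀ b : Fin n → ℝ, ∃! ζ : Fin n → ℝ,
      (Matrix.of fun i j : Fin n => Wker α ω (u i) (u j)).mulVec ζ = b := by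
  have hsymm : (Matrix.of fun i j : Fin n => Wker α ω (u i) (u j)).IsSymm := by
    ext i j
    simp [Wker, add_comm, min_comm, max_comm]
  have hpd : (Matrix.of fun i j : Fin n => Wker α ω (u i) (u j)).PosDef := by
    refine Matrix.posDef_iff_dotProduct_mulVec.mpr ⟨by
      rw [Matrix.IsHermitian, Matrix.conjTranspose_eq_transpose_of_trivial]; exact hsymm, ?_⟩
    intro v hv
    have hc : (fun i => Real.exp (-(ω * u i)) * v i) ≠ 0 := by
      obtain ⟨j, hj⟩ := Function.ne_iff.mp hv
      exact Function.ne_iff.mpr ⟨j, mul_ne_zero (Real.exp_ne_zero _) hj⟩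
    refine (wilson_H_form_pos hα hu0 hu hc).trans_eq ?_
    simp only [dotProduct, Matrix.mulVec, Matrix.of_apply, Finset.mul_sum, Pi.star_apply,
      star_trivial]
    refine Finset.sum_congr rfl fun i _ => Finset.sum_congr rfl fun j _ => ?_
    have : Real.exp (-(ω * (u i + u j))) = Real.exp (-(ω * u i)) * Real.exp (-(ω * u j)) := by
      rw [← Real.exp_add]; congr 1; ring
    rw [Wker, this]
    ring
  refine ⟨hsymm, hpd, fun b => ?_⟩
  exact Function.Bijective.existsUnique ⟨Matrix.mulVec_injective_iff_isUnit.mpr hpd.isUnit,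
    Matrix.mulVec_surjective_iff_isUnit.mpr hpd.isUnit⟩ b
end

section
/- Let α > 0, let N ≥ 1, let 0 < u₁ < u₂ < ⋯ < u_{N+1}, and let i ∈ {1, …, N}. Let M be the N×N matrix whose rows are indexed by the points s₁ < ⋯ < s_N obtained from (u₁, …, u_{N+1}) by deleting uᵢ, and whose columns are indexed by u₁, …, u_N, with entries M_{kl} = H(s_k, u_l). Then det M > 0. (This 'deleted-row minor' positivity is the core of the proof that Smith–Wilson hedge coefficients alternate in sign.) -/
/-! ### Sign changes of piecewise linear functions -/

/-- The piecewise linear function vanishing at `0` (when `v 0 = 0`), with slope `σ j` on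
`[v j, v (j + 1)]` for `j < N` and constant beyond `v N`. -/
noncomputable def pwLin (N : ℕ) (v σ : ℕ → ℝ) (x : ℝ) : ℝ :=
  ∑ j ∈ Finset.range N, σ j * (min x (v (j + 1)) - min x (v j))

theorem pwLin_continuous (N : ℕ) (v σ : ℕ → ℝ) : Continuous (pwLin N v σ) := by
  unfold pwLin
  fun_prop

theorem pwLin_zero (N : ℕ) {v : ℕ → ℝ} (σ : ℕ → ℝ) (hv : StrictMono v) (hv0 : v 0 = 0) :
    pwLin N v σ 0 = 0 := by
  unfold pwLin
  refine Finset.sum_eq_zero fun j _ => ?_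
  have h (i : ℕ) : 0 ≤ v i := hv0 ▸ hv.monotone (Nat.zero_le i)
  rw [min_eq_left (h _), min_eq_left (h _)]
  simp

/-- A rise of `ε • g` between `a` and `b` is witnessed by a piece meeting `(a, b)` on which
`ε • g` has positive slope. -/
theorem pwLin_exists_slope {N : ℕ} {v σ : ℕ → ℝ} (hv : StrictMono v) (ε : ℝ) {a b : ℝ}
    (hab : a ≤ b) (h : ε * pwLin N v σ a < ε * pwLin N v σ b) :
    ∃ j < N, 0 < ε * σ j ∧ v j < b ∧ a < v (j + 1) := by
  unfold pwLin at h
  rw [Finset.mul_sum, Finset.mul_sum] at h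
  obtain ⟨j, hj, hlt⟩ := Finset.exists_lt_of_sum_lt h
  have hvj := hv (Nat.lt_succ_self j)
  have hd : 0 < (ε * σ j) * ((min b (v (j + 1)) - min b (v j))
      - (min a (v (j + 1)) - min a (v j))) := by linarith
  have hmono : 0 ≤ (min b (v (j + 1)) - min b (v j)) - (min a (v (j + 1)) - min a (v j)) := by
    simp only [Nat.succ_eq_add_one] at hvj
    rcases le_total a (v j) with h1 | h1 <;> rcases le_total b (v j) with h2 | h2 <;>
    rcases le_total a (v (j + 1)) with h3 | h3 <;> rcases le_total b (v (j + 1)) with h4 | h4 <;>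
    simp only [min_eq_left, min_eq_right, h1, h2, h3, h4] <;> linarith
  refine ⟨j, Finset.mem_range.1 hj, pos_of_mul_pos_left hd hmono, ?_, ?_⟩
  · by_contra! hb
    have h1 : b ≤ v (j + 1) := hb.trans hvj.le
    rw [min_eq_left hb, min_eq_left h1, min_eq_left (hab.trans hb), min_eq_left (hab.trans h1)] at hd
    simp at hd
  · by_contra! ha
    have h1 : v j ≤ a := hvj.le.trans ha
    rw [min_eq_right ha, min_eq_right h1, min_eq_right (h1.trans hab),
      min_eq_right (ha.trans hab)] at hd
    simp at hd

theorem pwLin_sub {N : ℕ} {v σ : ℕ → ℝ} (hv : StrictMono v) {a b : ℝ} {j : ℕ} (hj : j < N)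
    (h1 : v j ≤ a) (hab : a ≤ b) (h2 : b ≤ v (j + 1)) :
    pwLin N v σ b - pwLin N v σ a = σ j * (b - a) := by
  unfold pwLin
  rw [← Finset.sum_sub_distrib, Finset.sum_eq_single j]
  · rw [min_eq_left h2, min_eq_left (hab.trans h2), min_eq_right h1, min_eq_right (h1.trans hab)]
    ring
  · intro i _ hij
    rcases lt_or_gt_of_ne hij with h | h
    · have e1 : v (i + 1) ≤ a := (hv.monotone (Nat.succ_le_of_lt h)).trans h1
      have e2 : v i ≤ a := (hv.monotone h.le).trans h1
      rw [min_eq_right e1, min_eq_right e2, min_eq_right (e1.trans hab),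
        min_eq_right (e2.trans hab)]
      ring
    · have e1 : b ≤ v i := h2.trans (hv.monotone (Nat.succ_le_of_lt h))
      have e2 : b ≤ v (i + 1) := e1.trans (hv.monotone (Nat.le_succ i))
      rw [min_eq_left e1, min_eq_left e2, min_eq_left (hab.trans e1), min_eq_left (hab.trans e2)]
      ring
  · intro h
    exact absurd (Finset.mem_range.2 hj) h

/-- Discrete sign-change count. If `g = pwLin N v σ` can only be nonzero on each
`[y k, y (k + 1)]` by taking both signs there, and `v k < y k < v (k + 2)`, then all slopes
vanish: each of the `N` intervals would force a new slope sign change, but `g` has only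
`N` nonconstant pieces. -/
theorem pwLin_slopes_eq_zero {N : ℕ} {v σ y : ℕ → ℝ} (hv : StrictMono v) (hv0 : v 0 = 0)
    (hy : ∀ k < N, y k < y (k + 1)) (hvy : ∀ k ≤ N, v k < y k)
    (hyv : ∀ k < N, y k < v (k + 2))
    (hg : ∀ k < N, ∀ ε : ℝ, (∃ x ∈ Set.Icc (y k) (y (k + 1)), 0 < ε * pwLin N v σ x) →
      ∃ x ∈ Set.Icc (y k) (y (k + 1)), ε * pwLin N v σ x < 0) :
    ∀ j < N, σ j = 0 := by
  set g := pwLin N v σ with hgdef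
  have hvnn (i : ℕ) : 0 ≤ v i := hv0 ▸ hv.monotone (Nat.zero_le i)
  have hg0 : g 0 = 0 := pwLin_zero N σ hv hv0
  -- If piece `j` starts before `t` and `ε • g` rises on it, then a fall of `ε • g` after `t`
  -- takes place on a piece of strictly larger index.
  have hnext : ∀ (ε t x : ℝ) (j : ℕ), 0 < ε * σ j → v j < t → t ≤ x → ε * g x < ε * g t →
      ∃ j' < N, j < j' ∧ 0 < -ε * σ j' ∧ v j' < x := by
    intro ε t x j hσ hjt htx hlt
    obtain ⟨j', hj'N, hσ', hj'x, htj'⟩ := pwLin_exists_slope (N := N) (σ := σ) hv (-ε) htx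
      (by rw [← hgdef]; linarith)
    refine ⟨j', hj'N, ?_, hσ', hj'x⟩
    have h1 : j < j' + 1 := hv.lt_iff_lt.1 (hjt.trans htj')
    rcases Nat.lt_succ_iff_lt_or_eq.1 h1 with h | h
    · exact h
    · subst h; linarith
  -- `R k`: up to `y k` the slopes have changed sign often enough to reach a piece of index `≥ k`.
  -- Either `g` vanishes on all of `[0, y k]` (that is `Z k`) or `R k` holds; `R N` is absurd.
  let R : ℕ → Prop := fun k => ∃ (ε t : ℝ) (j : ℕ), t ≤ y k ∧ k ≤ j ∧ j < N ∧
    0 < ε * σ j ∧ 0 < ε * g t ∧ v j < t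
  let Z : ℕ → Prop := fun k => ∀ x, 0 ≤ x → x ≤ y k → g x = 0
  have hR : ∀ k < N, R k → R (k + 1) := by
    rintro k hk ⟨ε, t, j, hty, hkj, hjN, hσ, hgt, hvt⟩
    have hyy := hy k hk
    by_cases hneg : ∃ x ∈ Set.Icc (y k) (y (k + 1)), ε * g x < 0
    · obtain ⟨x, hx, hgx⟩ := hneg
      obtain ⟨j', hj'N, hjj', hσ', hvx⟩ := hnext ε t x j hσ hvt (hty.trans hx.1) (by linarith)
      exact ⟨-ε, x, j', hx.2, by omega, hj'N, hσ', by linarith, hvx⟩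
    · exfalso
      -- Here `g` vanishes on `[y k, y (k + 1)]`, yet the piece containing a right neighbourhood
      -- of `y k` has nonzero slope.
      have hpos : ¬ ∃ x ∈ Set.Icc (y k) (y (k + 1)), 0 < ε * g x := fun h => hneg (hg k hk ε h)
      push Not at hneg hpos
      have hz : ∀ x ∈ Set.Icc (y k) (y (k + 1)), ε * g x = 0 := fun x hx =>
        le_antisymm (hpos x hx) (hneg x hx)
      have hz0 := hz (y k) ⟨le_rfl, hyy.le⟩
      obtain ⟨j', hj'N, hjj', hσ', hvx⟩ := hnext ε t (y k) j hσ hvt hty (by linarith)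
      have hj'k : j' < k + 2 := hv.lt_iff_lt.1 (hvx.trans (hyv k hk))
      obtain rfl : j' = k + 1 := by omega
      have hlt : y k < min (y (k + 1)) (v (k + 2)) := lt_min hyy (hyv k hk)
      have hlin := pwLin_sub (σ := σ) hv hj'N hvx.le hlt.le (min_le_right _ _)
      have hz1 := hz _ ⟨hlt.le, min_le_left _ _⟩
      rw [← hgdef] at hlin
      have h2 : ε * σ (k + 1) * (min (y (k + 1)) (v (k + 2)) - y k) = 0 := by
        linear_combination hz1 - hz0 - ε * hlin
      rcases mul_eq_zero.1 h2 with h3 | h3 <;> linarith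
  have hstart : ∀ x, g x ≠ 0 → ∃ ε : ℝ, 0 < ε * g x := fun x hx =>
    ⟨g x, mul_self_pos.2 hx⟩
  have hZ0 : Z 0 ∨ R 0 := by
    by_contra! h
    obtain ⟨hz, hr⟩ := h
    simp only [Z] at hz
    push Not at hz
    obtain ⟨x, hx0, hxy, hgx⟩ := hz
    obtain ⟨ε, hε⟩ := hstart x hgx
    obtain ⟨j, hjN, hσ, hjx, -⟩ := pwLin_exists_slope (N := N) (σ := σ) hv ε hx0
      (by rw [← hgdef, hg0]; linarith)
    exact hr ⟨ε, x, j, hxy, Nat.zero_le _, hjN, hσ, hε, hjx⟩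
  have hZ : ∀ k < N, Z k → Z (k + 1) ∨ R (k + 1) := by
    intro k hk hz
    have hyy := hy k hk
    have hyk : 0 ≤ y k := (hvnn k).trans (hvy k hk.le).le
    have hgy : g (y k) = 0 := hz _ hyk le_rfl
    by_contra! h
    obtain ⟨hz1, hr⟩ := h
    simp only [Z] at hz1
    push Not at hz1
    obtain ⟨x, hx0, hxy, hgx⟩ := hz1
    have hkx : y k < x := by
      by_contra! hle
      exact hgx (hz x hx0 hle)
    obtain ⟨ε, hε⟩ := hstart x hgx
    obtain ⟨d, hd, hgd⟩ := hg k hk ε ⟨x, ⟨hkx.le, hxy⟩, hε⟩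
    have key : ∀ (ε a b : ℝ), y k ≤ a → a ≤ b → b ≤ y (k + 1) → 0 < ε * g a → ε * g b < 0 →
        R (k + 1) := by
      intro ε a b hka hab hb hga hgb
      obtain ⟨j, hjN, hσ, hja, hkj⟩ := pwLin_exists_slope (N := N) (σ := σ) hv ε hka
        (by rw [← hgdef, hgy]; linarith)
      have hkj' : k < j + 1 := hv.lt_iff_lt.1 ((hvy k hk.le).trans hkj)
      obtain ⟨j', hj'N, hjj', hσ', hvx⟩ := hnext ε a b j hσ hja hab (by linarith)
      exact ⟨-ε, b, j', hb, by omega, hj'N, hσ', by linarith, hvx⟩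
    rcases le_total x d with hxd | hxd
    · exact hr (key ε x d hkx.le hxd hd.2 hε hgd)
    · exact hr (key (-ε) d x hd.1 hxd hxy (by linarith) (by linarith))
  have hall : ∀ k ≤ N, Z k ∨ R k := by
    intro k
    induction k with
    | zero => exact fun _ => hZ0
    | succ k ih =>
      intro hk
      rcases ih (by omega) with h | h
      · exact hZ k (by omega) h
      · exact Or.inr (hR k (by omega) h)
  rcases hall N le_rfl with h | ⟨ε, t, j, -, h1, h2, -⟩
  · intro j hj
    have hjj := hv (Nat.lt_succ_self j)
    have hlin := pwLin_sub (σ := σ) hv hj le_rfl hjj.le le_rfl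
    have hle : v (j + 1) ≤ y N := (hv.monotone (Nat.succ_le_of_lt hj)).trans (hvy N le_rfl).le
    rw [← hgdef, h _ (hvnn _) hle, h _ (hvnn _) (hjj.le.trans hle)] at hlin
    rcases mul_eq_zero.1 (hlin.symm.trans (sub_self 0)) with h3 | h3
    · exact h3
    · simp only [Nat.succ_eq_add_one] at hjj h3
      linarith
  · omega

/-- Summation by parts: `∑ c l * min x (v (l + 1))` has slopes the tail sums of `c`. -/
theorem sum_min_eq_pwLin {N : ℕ} {v : ℕ → ℝ} (c : ℕ → ℝ) (hv0 : v 0 = 0) {x : ℝ} (hx : 0 ≤ x) :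
    ∑ l ∈ Finset.range N, c l * min x (v (l + 1)) =
      pwLin N v (fun j => ∑ l ∈ Finset.Ico j N, c l) x := by
  have h : ∀ n ≤ N, ∑ l ∈ Finset.range n, c l * min x (v (l + 1)) =
      pwLin n v (fun j => ∑ l ∈ Finset.Ico j N, c l) x
        - (∑ l ∈ Finset.Ico n N, c l) * min x (v n) := by
    intro n
    induction n with
    | zero => simp [pwLin, hv0, hx]
    | succ n ih =>
      intro hn
      rw [Finset.sum_range_succ, ih (by omega)]
      simp only [pwLin, Finset.sum_range_succ]
      rw [Finset.sum_eq_sum_Ico_succ_bot (show n < N by omega) c]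
      ring
  simpa using h N le_rfl

/-! ### Derivatives of the kernel -/

theorem hasDerivAt_glue {F G A A' B B' : ℝ → ℝ} {t : ℝ}
    (hA : ∀ x ≤ t, F x = A x) (hB : ∀ x, t ≤ x → F x = B x)
    (hA' : ∀ x, HasDerivAt A (A' x) x) (hB' : ∀ x, HasDerivAt B (B' x) x)
    (hGA : ∀ x ≤ t, G x = A' x) (hGB : ∀ x, t ≤ x → G x = B' x) (x : ℝ) :
    HasDerivAt F (G x) x := by
  rcases lt_trichotomy x t with h | h | h
  · rw [hGA x h.le]
    refine (hA' x).congr_of_eventuallyEq ?_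
    filter_upwards [Iio_mem_nhds h] with z hz using hA z (le_of_lt hz)
  · subst h
    rw [← hasDerivWithinAt_univ, ← Set.Iic_union_Ici (a := x)]
    refine HasDerivWithinAt.union ?_ ?_
    · rw [hGA x le_rfl]
      exact (hA' x).hasDerivWithinAt.congr (fun z hz => hA z hz) (hA x le_rfl)
    · rw [hGB x le_rfl]
      exact (hB' x).hasDerivWithinAt.congr (fun z hz => hB z hz) (hB x le_rfl)
  · rw [hGB x h.le]
    refine (hB' x).congr_of_eventuallyEq ?_
    filter_upwards [Ioi_mem_nhds h] with z hz using hB z (le_of_lt hz)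

/-- The intermediate function `e^{2x} ∂ₓ (e^{-x} H(x,t))` for `α = 1`. -/
noncomputable def Pker (x t : ℝ) : ℝ :=
  if x ≤ t then Real.exp x * (1 - x) - Real.exp (-t) else 2 * Real.sinh t - t * Real.exp x

theorem Pker_of_le {x t : ℝ} (h : x ≤ t) : Pker x t = Real.exp x * (1 - x) - Real.exp (-t) :=
  if_pos h

theorem Pker_of_ge {x t : ℝ} (h : t ≤ x) : Pker x t = 2 * Real.sinh t - t * Real.exp x := by
  rcases h.eq_or_lt with h | h
  · subst h
    rw [Pker_of_le le_rfl, Real.sinh_eq]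
    ring
  · exact if_neg (not_le.2 h)

theorem Hker_of_le {x t : ℝ} (h : x ≤ t) : Hker 1 x t = x - Real.exp (-t) * Real.sinh x := by
  simp [Hker, h]

theorem Hker_of_ge {x t : ℝ} (h : t ≤ x) : Hker 1 x t = t - Real.exp (-x) * Real.sinh t := by
  simp [Hker, h]

theorem hasDerivAt_exp_neg_mul_Hker (t x : ℝ) :
    HasDerivAt (fun x => Real.exp (-x) * Hker 1 x t) (Real.exp (-2 * x) * Pker x t) x := by
  have e1 (x : ℝ) : Real.exp x = (Real.exp (-x))⁻¹ := by rw [Real.exp_neg, inv_inv]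
  have e2 (x : ℝ) : Real.exp (-2 * x) = Real.exp (-x) ^ 2 := by
    rw [← Real.exp_nat_mul]; congr 1; push_cast; ring
  have e3 (x : ℝ) : HasDerivAt (fun x : ℝ => Real.exp (-x)) (-Real.exp (-x)) x := by
    simpa using (hasDerivAt_neg x).exp
  refine hasDerivAt_glue (t := t)
    (A := fun x => Real.exp (-x) * (x - Real.exp (-t) * Real.sinh x))
    (A' := fun x => -Real.exp (-x) * (x - Real.exp (-t) * Real.sinh x)
      + Real.exp (-x) * (1 - Real.exp (-t) * Real.cosh x))
    (B := fun x => Real.exp (-x) * (t - Real.exp (-x) * Real.sinh t))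
    (B' := fun x => -Real.exp (-x) * (t - Real.exp (-x) * Real.sinh t)
      + Real.exp (-x) * (0 - (-Real.exp (-x)) * Real.sinh t))
    (G := fun x => Real.exp (-2 * x) * Pker x t) ?_ ?_ ?_ ?_ ?_ ?_ x
  · intro x hx; simp only [Hker_of_le hx]
  · intro x hx; simp only [Hker_of_ge hx]
  · intro x
    exact (e3 x).mul ((hasDerivAt_id x).sub ((Real.hasDerivAt_sinh x).const_mul _))
  · intro x
    exact (e3 x).mul ((hasDerivAt_const x t).sub ((e3 x).mul_const _))
  · intro x hx
    have := (Real.exp_pos (-x)).ne'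
    simp only [Pker_of_le hx]
    rw [Real.sinh_eq, Real.cosh_eq, e2, e1 x]
    field_simp
    ring
  · intro x hx
    have := (Real.exp_pos (-x)).ne'
    simp only [Pker_of_ge hx]
    rw [e2, e1 x]
    field_simp
    ring

theorem hasDerivAt_Pker (t x : ℝ) :
    HasDerivAt (fun x => Pker x t) (-(Real.exp x * min x t)) x := by
  refine hasDerivAt_glue (t := t)
    (A := fun x => Real.exp x * (1 - x) - Real.exp (-t))
    (A' := fun x => Real.exp x * (1 - x) + Real.exp x * (0 - 1))
    (B := fun x => 2 * Real.sinh t - t * Real.exp x)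
    (B' := fun x => 0 - t * Real.exp x)
    (G := fun x => -(Real.exp x * min x t)) ?_ ?_ ?_ ?_ ?_ ?_ x
  · intro x hx; exact Pker_of_le hx
  · intro x hx; exact Pker_of_ge hx
  · intro x
    exact ((Real.hasDerivAt_exp x).mul ((hasDerivAt_const x 1).sub (hasDerivAt_id x))).sub_const _
  · intro x
    exact (hasDerivAt_const x _).sub ((Real.hasDerivAt_exp x).const_mul _)
  · intro x hx
    simp only [min_eq_left hx]; ring
  · intro x hx
    simp only [min_eq_right hx]; ring

/-! ### Nonsingularity -/

/-- If `p' = -e^x g` and `p` takes equal values at the ends of an interval, then `g` either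
vanishes on it or takes both signs: the integral of `e^x g` is zero. -/
theorem exists_neg_of_exists_pos {p g : ℝ → ℝ} (hg : Continuous g) {a b : ℝ} (hab : a < b)
    (hp : ∀ x ∈ Set.Icc a b, HasDerivAt p (-(Real.exp x * g x)) x) (hpa : p a = p b)
    (ε : ℝ) (h : ∃ x ∈ Set.Icc a b, 0 < ε * g x) : ∃ x ∈ Set.Icc a b, ε * g x < 0 := by
  by_contra! hnn
  obtain ⟨x₀, hx₀, hpos⟩ := h
  have hc : Continuous fun x => Real.exp x * (ε * g x) := by fun_prop
  have h1 : 0 < ∫ x in a..b, Real.exp x * (ε * g x) :=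
    intervalIntegral.integral_pos hab hc.continuousOn
      (fun x hx => mul_nonneg (Real.exp_pos x).le (hnn x ⟨hx.1.le, hx.2⟩))
      ⟨x₀, hx₀, mul_pos (Real.exp_pos _) hpos⟩
  have h2 : ∫ x in a..b, Real.exp x * (ε * g x) = -ε * p b - -ε * p a := by
    refine intervalIntegral.integral_eq_sub_of_hasDerivAt (f := fun x => -ε * p x)
      (fun x hx => ?_) (hc.intervalIntegrable a b)
    rw [Set.uIcc_of_le hab.le] at hx
    exact ((hp x hx).const_mul (-ε)).congr_deriv (by ring)
  rw [h2, hpa] at h1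
  simp at h1

/-- Schoenberg–Whitney type nonsingularity: a combination of the functions `H(·, v (l + 1))`
vanishing at `N` points `s k ∈ [v k, v (k + 1)]` is trivial. -/
theorem Hker_coeffs_eq_zero {N : ℕ} {v s c : ℕ → ℝ} (hv : StrictMono v) (hv0 : v 0 = 0)
    (hs : StrictMono s) (hs0 : s 0 = 0) (hvs : ∀ k, v k ≤ s k) (hsv : ∀ k, s k ≤ v (k + 1))
    (hf : ∀ k < N, ∑ l ∈ Finset.range N, c l * Hker 1 (s (k + 1)) (v (l + 1)) = 0) :
    ∀ l < N, c l = 0 := by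
  have hvnn (i : ℕ) : 0 ≤ v i := hv0 ▸ hv.monotone (Nat.zero_le i)
  set f : ℝ → ℝ := fun x => ∑ l ∈ Finset.range N, c l * Hker 1 x (v (l + 1)) with hfdef
  set p : ℝ → ℝ := fun x => ∑ l ∈ Finset.range N, c l * Pker x (v (l + 1)) with hpdef
  set σ : ℕ → ℝ := fun j => ∑ l ∈ Finset.Ico j N, c l with hσdef
  have hfs : ∀ k ≤ N, f (s k) = 0 := by
    intro k hk
    cases k with
    | zero =>
      refine Finset.sum_eq_zero fun l _ => ?_
      rw [hs0, Hker_of_le (hvnn _)]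
      simp
    | succ k => exact hf k hk
  have hh : ∀ x, HasDerivAt (fun x => Real.exp (-x) * f x) (Real.exp (-2 * x) * p x) x := by
    intro x
    have h := HasDerivAt.fun_sum (u := Finset.range N) fun l _ =>
      (hasDerivAt_exp_neg_mul_Hker (v (l + 1)) x).const_mul (c l)
    refine (h.congr_deriv ?_).congr_of_eventuallyEq (Filter.Eventually.of_forall fun z => ?_)
    · rw [hpdef, Finset.mul_sum]
      exact Finset.sum_congr rfl fun l _ => by ring
    · simp only [hfdef, Finset.mul_sum]
      exact Finset.sum_congr rfl fun l _ => by ring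
  have hp : ∀ x, 0 ≤ x → HasDerivAt p (-(Real.exp x * pwLin N v σ x)) x := by
    intro x hx
    have h := HasDerivAt.fun_sum (u := Finset.range N) fun l _ =>
      (hasDerivAt_Pker (v (l + 1)) x).const_mul (c l)
    refine h.congr_deriv ?_
    rw [← sum_min_eq_pwLin c hv0 hx, Finset.mul_sum, ← Finset.sum_neg_distrib]
    exact Finset.sum_congr rfl fun l _ => by ring
  have hroll : ∀ k, ∃ y, k < N → s k < y ∧ y < s (k + 1) ∧ p y = 0 := by
    intro k
    by_cases hk : k < N
    · have hcont : Continuous (fun x => Real.exp (-x) * f x) :=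
        continuous_iff_continuousAt.2 fun x => (hh x).continuousAt
      obtain ⟨y, hy, h0⟩ := exists_hasDerivAt_eq_zero (hs (Nat.lt_succ_self k))
        hcont.continuousOn (by simp only [hfs k hk.le, hfs (k + 1) hk, Nat.succ_eq_add_one, mul_zero])
        (fun x _ => hh x)
      exact ⟨y, fun _ => ⟨hy.1, hy.2, (mul_eq_zero.1 h0).resolve_left (Real.exp_pos _).ne'⟩⟩
    · exact ⟨0, fun h => absurd h hk⟩
  choose y₀ hy₀ using hroll
  -- Beyond `v N` one has `e^{-x} f = A e^{-x} - B e^{-2x}`; as this vanishes at `s N`,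
  -- its derivative vanishes at `s N + log 2`. This plays the role of a zero of `f` at infinity.
  have hlast : p (s N + Real.log 2) = 0 := by
    have hl2 : 0 < Real.log 2 := Real.log_pos (by norm_num)
    have hNz := hfs N le_rfl
    have h1 : p (s N + Real.log 2) = -2 * Real.exp (s N) * f (s N) := by
      rw [hpdef, hfdef]
      simp only
      rw [Finset.mul_sum]
      refine Finset.sum_congr rfl fun l hl => ?_
      have hle : v (l + 1) ≤ s N :=
        (hv.monotone (Nat.succ_le_of_lt (Finset.mem_range.1 hl))).trans (hvs N)
      rw [Pker_of_ge (hle.trans (by linarith)), Hker_of_ge hle, Real.exp_add,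
        Real.exp_log (by norm_num), Real.exp_neg]
      have := (Real.exp_pos (s N)).ne'
      field_simp
      ring
    rw [h1, hNz, mul_zero]
  set y : ℕ → ℝ := fun k => if k < N then y₀ k else s N + Real.log 2 with hydef
  have hl2 : 0 < Real.log 2 := Real.log_pos (by norm_num)
  have hylt : ∀ k < N, y k = y₀ k := fun k hk => if_pos hk
  have hyN : y N = s N + Real.log 2 := if_neg (lt_irrefl N)
  have hsy : ∀ k ≤ N, s k < y k := by
    intro k hk
    rcases hk.lt_or_eq with h | h
    · rw [hylt k h]; exact (hy₀ k h).1
    · rw [h, hyN]; linarith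
  have hpy : ∀ k ≤ N, p (y k) = 0 := by
    intro k hk
    rcases hk.lt_or_eq with h | h
    · rw [hylt k h]; exact (hy₀ k h).2.2
    · rw [h, hyN]; exact hlast
  have hys : ∀ k < N, y k < s (k + 1) := by
    intro k h
    rw [hylt k h]; exact (hy₀ k h).2.1
  have hyy : ∀ k < N, y k < y (k + 1) := fun k hk => (hys k hk).trans (hsy (k + 1) hk)
  have hσ := pwLin_slopes_eq_zero (N := N) (σ := σ) (y := y) hv hv0 hyy
    (fun k hk => (hvs k).trans_lt (hsy k hk))
    (fun k hk => (hys k hk).trans_le (hsv (k + 1)))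
    (fun k hk ε h => exists_neg_of_exists_pos (pwLin_continuous N v σ) (hyy k hk)
      (fun x hx => hp x (((hvnn k).trans ((hvs k).trans (hsy k hk.le).le)).trans hx.1))
      ((hpy k hk.le).trans (hpy (k + 1) hk).symm) ε h)
  intro l hl
  have h1 : σ l = c l + σ (l + 1) := Finset.sum_eq_sum_Ico_succ_bot hl c
  have h2 : σ (l + 1) = 0 := by
    rcases (Nat.succ_le_of_lt hl).lt_or_eq with h | h
    · exact hσ _ h
    · simp only [hσdef, Nat.succ_eq_add_one] at h ⊢
      rw [h]; simp
  rw [hσ l hl, h2] at h1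
  linarith

/-- The matrix `H(s (k + 1), v (l + 1))` for `α = 1`. -/
noncomputable def Hmat (N : ℕ) (s v : ℕ → ℝ) : Matrix (Fin N) (Fin N) ℝ :=
  Matrix.of fun k l => Hker 1 (s (k + 1)) (v (l + 1))

theorem Hmat_det_ne_zero {N : ℕ} {v s : ℕ → ℝ} (hv : StrictMono v) (hv0 : v 0 = 0)
    (hs : StrictMono s) (hs0 : s 0 = 0) (hvs : ∀ k, v k ≤ s k) (hsv : ∀ k, s k ≤ v (k + 1)) :
    (Hmat N s v).det ≠ 0 := by
  intro h
  obtain ⟨w, hw, hMw⟩ := Matrix.exists_mulVec_eq_zero_iff.2 h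
  apply hw
  have key := Hker_coeffs_eq_zero (N := N) (c := fun l => if hl : l < N then w ⟨l, hl⟩ else 0)
    hv hv0 hs hs0 hvs hsv (by
      intro k hk
      have h1 := congrFun hMw ⟨k, hk⟩
      simp only [Matrix.mulVec, dotProduct, Hmat, Matrix.of_apply, Pi.zero_apply] at h1
      rw [Finset.sum_range, ← h1]
      refine Finset.sum_congr rfl fun l _ => ?_
      simp [mul_comm])
  funext l
  simpa using key l l.2

/-! ### Sign of the determinant -/

/-- The Brownian covariance matrix has positive determinant, by its `LU` factorization. -/
theorem min_det_pos (N : ℕ) {v : ℕ → ℝ} (hv : StrictMono v) (hv0 : v 0 = 0) :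
    0 < (Matrix.of fun k l : Fin N => min (v (k + 1)) (v (l + 1))).det := by
  set L : Matrix (Fin N) (Fin N) ℝ :=
    Matrix.of fun k j => if j ≤ k then v (j + 1) - v j else 0 with hL
  set U : Matrix (Fin N) (Fin N) ℝ := Matrix.of fun j l => if j ≤ l then 1 else 0 with hU
  have hmul : (Matrix.of fun k l : Fin N => min (v (k + 1)) (v (l + 1))) = L * U := by
    ext k l
    have htel : ∀ m < N, ∑ j : Fin N, (if (j : ℕ) ≤ m then v (j + 1) - v j else 0)
        = v (m + 1) := by
      intro m hm
      rw [← Finset.sum_range (fun j => if j ≤ m then v (j + 1) - v j else 0),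
        ← Finset.sum_filter]
      have : (Finset.range N).filter (fun j => j ≤ m) = Finset.range (m + 1) := by
        ext j; simp; omega
      rw [this, Finset.sum_range_sub, hv0, sub_zero]
    rw [Matrix.mul_apply, Matrix.of_apply, ← hv.monotone.map_min,
      show min ((k : ℕ) + 1) (l + 1) = min (k : ℕ) l + 1 by omega,
      ← htel (min (k : ℕ) l) (by omega)]
    refine Finset.sum_congr rfl fun j _ => ?_
    simp only [hL, hU, Matrix.of_apply, Fin.le_def, le_min_iff]
    by_cases h1 : (j : ℕ) ≤ k <;> by_cases h2 : (j : ℕ) ≤ l <;> simp [h1, h2]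
  have hLt : L.IsLowerTriangular := by
    intro i j hij
    have : ¬ j ≤ i := not_le.2 (by simpa using hij)
    simp [hL, this]
  have hUt : U.IsUpperTriangular := by
    intro i j hij
    have : ¬ i ≤ j := not_le.2 (by simpa using hij)
    simp [hU, this]
  rw [hmul, Matrix.det_mul, Matrix.det_of_isLowerTriangular L hLt, Matrix.det_of_isUpperTriangular hUt]
  refine mul_pos (Finset.prod_pos fun i _ => ?_) (Finset.prod_pos fun i _ => ?_)
  · simpa [hL] using hv (Nat.lt_succ_self i)
  · simp [hU]

theorem pos_iff_pos_of_ne_zero {φ : ℝ → ℝ} {a b : ℝ} (hab : a ≤ b)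
    (hc : ContinuousOn φ (Set.Icc a b)) (h0 : ∀ x ∈ Set.Icc a b, φ x ≠ 0) :
    0 < φ a ↔ 0 < φ b := by
  constructor
  · intro ha
    by_contra! hb
    obtain ⟨x, hx, h⟩ := intermediate_value_Icc' hab hc ⟨hb, ha.le⟩
    exact h0 x hx h
  · intro hb
    by_contra! ha
    obtain ⟨x, hx, h⟩ := intermediate_value_Icc hab hc ⟨ha, hb.le⟩
    exact h0 x hx h

theorem tendsto_Hker_scaled {s t : ℝ} (hs : 0 < s) (ht : 0 < t) :
    Filter.Tendsto (fun a : ℝ => a⁻¹ * Hker 1 (a * s) (a * t)) Filter.atTop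
      (nhds (min s t)) := by
  have h0 : Filter.Tendsto (fun a : ℝ => min s t - a⁻¹) Filter.atTop (nhds (min s t)) := by
    simpa using tendsto_const_nhds.sub tendsto_inv_atTop_zero (a := min s t)
  refine tendsto_of_tendsto_of_tendsto_of_le_of_le' h0 tendsto_const_nhds ?_ ?_
  all_goals
    filter_upwards [Filter.eventually_gt_atTop (0 : ℝ)] with a ha
    have hm : 0 < min s t := lt_min hs ht
    have e : a⁻¹ * Hker 1 (a * s) (a * t) =
        min s t - a⁻¹ * (Real.exp (-(a * max s t)) * Real.sinh (a * min s t)) := by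
      simp only [Hker, one_mul]
      rw [← mul_min_of_nonneg _ _ ha.le, ← mul_max_of_nonneg _ _ ha.le]
      field_simp
    have hai : 0 < a⁻¹ := inv_pos.2 ha
    rw [e]
  · have hle : Real.exp (-(a * max s t)) * Real.sinh (a * min s t) ≤ 1 := by
      have h1 : Real.sinh (a * min s t) ≤ Real.exp (a * max s t) := by
        have h2 : Real.exp (a * min s t) ≤ Real.exp (a * max s t) :=
          Real.exp_le_exp.2 (mul_le_mul_of_nonneg_left min_le_max ha.le)
        have h3 := Real.exp_pos (-(a * min s t))
        have h4 := Real.exp_pos (a * min s t)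
        rw [Real.sinh_eq]
        linarith
      calc _ ≤ Real.exp (-(a * max s t)) * Real.exp (a * max s t) :=
            mul_le_mul_of_nonneg_left h1 (Real.exp_pos _).le
        _ = 1 := by rw [← Real.exp_add]; simp
    nlinarith
  · have : 0 ≤ Real.sinh (a * min s t) := Real.sinh_nonneg_iff.2 (by positivity)
    have : 0 ≤ a⁻¹ * (Real.exp (-(a * max s t)) * Real.sinh (a * min s t)) := by positivity
    linarith

theorem Hker_continuous {X : Type*} [TopologicalSpace X] {f g : X → ℝ} (hf : Continuous f)
    (hg : Continuous g) : Continuous fun x => Hker 1 (f x) (g x) := by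
  unfold Hker
  fun_prop

/-- The Gram matrix `H(v k, v l)` has positive determinant: dilating `v` never makes it singular,
and for large dilations it is asymptotically a multiple of the Brownian covariance matrix. -/
theorem Hmat_self_det_pos (N : ℕ) {v : ℕ → ℝ} (hv : StrictMono v) (hv0 : v 0 = 0) :
    0 < (Hmat N v v).det := by
  set φ : ℝ → ℝ := fun a => (Hmat N (fun k => a * v k) (fun k => a * v k)).det with hφ
  have hvp (i : ℕ) : 0 < v (i + 1) := hv0 ▸ hv (Nat.succ_pos i)
  have hlim : Filter.Tendsto (fun a : ℝ => (a⁻¹ • Hmat N (fun k => a * v k) (fun k => a * v k)).det)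
      Filter.atTop (nhds (Matrix.of fun k l : Fin N => min (v (k + 1)) (v (l + 1))).det) := by
    refine ((continuous_id.matrix_det).tendsto _).comp ?_
    refine tendsto_pi_nhds.2 fun k => tendsto_pi_nhds.2 fun l => ?_
    exact tendsto_Hker_scaled (hvp k) (hvp l)
  obtain ⟨b, hb, hb1⟩ := ((hlim.eventually (lt_mem_nhds (min_det_pos N hv hv0))).and
    (Filter.eventually_ge_atTop 1)).exists
  have hφb : 0 < φ b := by
    rw [Matrix.det_smul] at hb
    exact pos_of_mul_pos_right hb (by positivity)
  have hc : Continuous φ := by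
    refine Continuous.matrix_det (continuous_pi fun k => continuous_pi fun l => ?_)
    exact Hker_continuous (by fun_prop) (by fun_prop)
  have h1 : 0 < φ 1 := by
    refine (pos_iff_pos_of_ne_zero hb1 hc.continuousOn fun a ha => ?_).2 hφb
    have ha0 : 0 < a := lt_of_lt_of_le one_pos ha.1
    have hm : StrictMono fun k => a * v k := fun i j hij => mul_lt_mul_of_pos_left (hv hij) ha0
    exact Hmat_det_ne_zero hm (by simp [hv0]) hm (by simp [hv0]) (fun _ => le_rfl)
      (fun k => (hm (Nat.lt_succ_self k)).le)
  simpa [hφ] using h1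

/-- Moving the row points linearly from `v` to `s` keeps the matrix nonsingular, so the sign of
the determinant is that of the Gram matrix. -/
theorem Hmat_det_pos (N : ℕ) {v s : ℕ → ℝ} (hv : StrictMono v) (hv0 : v 0 = 0)
    (hs : StrictMono s) (hs0 : s 0 = 0) (hvs : ∀ k, v k ≤ s k) (hsv : ∀ k, s k ≤ v (k + 1)) :
    0 < (Hmat N s v).det := by
  set r : ℝ → ℕ → ℝ := fun τ k => (1 - τ) * v k + τ * s k with hr
  have hc : Continuous fun τ => (Hmat N (r τ) v).det := by
    refine Continuous.matrix_det (continuous_pi fun k => continuous_pi fun l => ?_)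
    exact Hker_continuous (by fun_prop) (by fun_prop)
  have key := pos_iff_pos_of_ne_zero (φ := fun τ => (Hmat N (r τ) v).det) zero_le_one
    hc.continuousOn (by
      rintro τ ⟨h0, h1⟩
      refine Hmat_det_ne_zero hv hv0 ?_ (by simp [hr, hv0, hs0]) (fun k => ?_) (fun k => ?_)
      · intro i j hij
        have e1 := hv hij
        have e2 := hs hij
        simp only [hr]
        rcases h0.eq_or_lt with h | h
        · subst h; linarith
        · have := mul_lt_mul_of_pos_left e2 h
          have := mul_le_mul_of_nonneg_left e1.le (sub_nonneg.2 h1)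
          linarith
      · have := mul_nonneg h0 (sub_nonneg.2 (hvs k))
        simp only [hr]; linarith
      · have a1 := mul_nonneg h0 (sub_nonneg.2 (hsv k))
        have a2 := mul_nonneg (sub_nonneg.2 h1) (sub_nonneg.2 ((hvs k).trans (hsv k)))
        simp only [hr]; linarith)
  have e0 : r 0 = v := by funext k; simp [hr]
  have e1 : r 1 = s := by funext k; simp [hr]
  simp only [e0, e1] at key
  exact key.1 (Hmat_self_det_pos N hv hv0)

/-- Deleted-row minor positivity: for `α > 0`, points `0 < u₁ < ⋯ < u_{N+1}` and an index
`i` (0-indexed `i < N`, i.e. `1 ≤ i ≤ N` in 1-indexed terms), the `N×N` matrix whose rows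
are indexed by the points obtained from `(u₁,…,u_{N+1})` by deleting `uᵢ` (via `succAbove`)
and whose columns are indexed by `u₁,…,u_N`, with entries given by the Wilson H-function,
has strictly positive determinant. -/
theorem wilson_H_deleted_row_minor_pos (α : ℝ) (hα : 0 < α) (N : ℕ) (hN : 1 ≤ N)
    (u : Fin (N + 1) → ℝ) (hu0 : ∀ j, 0 < u j) (hu : StrictMono u)
    (i : Fin (N + 1)) (hi : (i : ℕ) < N) :
    0 < (Matrix.of fun k l : Fin N =>
      Hker α (u (i.succAbove k)) (u (Fin.castSucc l))).det := by
  -- `v` is `0, α u₁, …, α u_{N+1}`, continued with unit steps so as to be strictly increasing.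
  let v : ℕ → ℝ := fun k => if k = 0 then 0 else
    if h : k - 1 < N + 1 then α * u ⟨k - 1, h⟩ else α * u (Fin.last N) + (k - N - 1 : ℝ)
  have hvu : ∀ j : Fin (N + 1), v (j + 1) = α * u j := by
    intro j
    have : (j : ℕ) + 1 - 1 < N + 1 := by omega
    simp only [v, this, dite_true, Nat.succ_ne_zero, if_false]
    rfl
  have hv0 : v 0 = 0 := by simp [v]
  have hv : StrictMono v := by
    refine strictMono_nat_of_lt_succ fun k => ?_
    rcases Nat.eq_zero_or_pos k with rfl | hk
    · rw [hv0, show (0 : ℕ) + 1 = ((0 : Fin (N + 1)) : ℕ) + 1 by simp, hvu]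
      exact mul_pos hα (hu0 0)
    · obtain ⟨m, rfl⟩ : ∃ m, k = m + 1 := ⟨k - 1, by omega⟩
      rcases lt_trichotomy m N with h | h | h
      · have e1 := hvu ⟨m, by omega⟩
        have e2 := hvu ⟨m + 1, by omega⟩
        simp only at e1 e2
        rw [e1, e2]
        exact mul_lt_mul_of_pos_left (hu (by simp [Fin.lt_def])) hα
      · subst h
        have e1 := hvu (Fin.last m)
        simp only [Fin.val_last] at e1
        rw [e1]
        simp [v]
        linarith
      · have h1 : ¬ (m + 1 - 1 < N + 1) := by omega
        have h2 : ¬ (m + 1 + 1 - 1 < N + 1) := by omega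
        simp only [v, h1, h2, dite_false]
        simp
  let w : ℕ → ℕ := fun k => if k ≤ i then k else k + 1
  have hw : StrictMono w := by
    intro a b hab
    simp only [w]
    split_ifs <;> omega
  have hpos := Hmat_det_pos N (s := fun k => v (w k)) hv hv0 (hv.comp hw) (by simp [w, hv0])
    (fun k => hv.monotone (by simp only [w]; split_ifs <;> omega))
    (fun k => hv.monotone (by simp only [w]; split_ifs <;> omega))
  convert hpos using 2
  ext k l
  have e1 : v (w (k + 1)) = α * u (i.succAbove k) := by
    rw [← hvu]
    congr 1
    simp only [w, Fin.succAbove, Fin.lt_def, Fin.val_castSucc]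
    split_ifs with h1 h2 h2
    · simp
    · omega
    · omega
    · simp
  have e2 : v (l + 1) = α * u (Fin.castSucc l) := by
    rw [← hvu]
    simp
  simp only [Hmat, Matrix.of_apply]
  rw [e1, e2]
  simp only [Hker, one_mul]
  rw [← mul_min_of_nonneg _ _ hα.le, ← mul_max_of_nonneg _ _ hα.le]
end

section
/- Let α > 0, let N ≥ 1, and let 0 < u₁ < u₂ < ⋯ < u_{N+1}. Let 𝐇 be the (N+1)×(N+1) matrix with entries 𝐇_{jk} = H(u_j, u_k), and let 𝐁 = 𝐇⁻¹ be its inverse (the precision matrix). Then for every i ∈ {1, …, N}, the entry 𝐁_{i,N+1} is nonzero and has sign (−1)^{N+1−i}; in particular the entries of the last column of the precision matrix above the diagonal alternate in sign, with 𝐁_{N,N+1} < 0. -/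
/-- The kernel `H(x, y)` for `α = 1`, viewed as a function of `x` with a knot at `y`: a solution of
`f'''' = f''` on either side of the knot. The truncation `max (x - y) 0` encodes the two cases. -/
noncomputable def kerA (y x : ℝ) : ℝ :=
  x - Real.exp (-y) * Real.sinh x + (Real.sinh (max (x - y) 0) - max (x - y) 0)

/-- The `x`-derivative of `kerA y`. -/
noncomputable def kerB (y x : ℝ) : ℝ :=
  1 - Real.exp (-y) * Real.cosh x + (Real.cosh (max (x - y) 0) - 1)

/-- The second `x`-derivative of `kerA y`. -/
noncomputable def kerC (y x : ℝ) : ℝ :=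
  - Real.exp (-y) * Real.sinh x + Real.sinh (max (x - y) 0)

/-- The right-hand third `x`-derivative of `kerA y`; it jumps by `1` at the knot. -/
noncomputable def kerD (y x : ℝ) : ℝ :=
  - Real.exp (-y) * Real.cosh x + (if y ≤ x then Real.cosh (x - y) else 0)

lemma Hker_one (x y : ℝ) : Hker 1 x y = kerA y x := by
  unfold Hker kerA
  rcases le_total x y with h | h
  · rw [min_eq_left h, max_eq_right h, max_eq_right (by linarith)]; simp
  · rw [min_eq_right h, max_eq_left h, max_eq_left (by linarith)]
    have e1 : Real.exp (-(1 * x)) = Real.cosh x - Real.sinh x := by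
      rw [one_mul, Real.cosh_sub_sinh]
    have e2 : Real.exp (-y) = Real.cosh y - Real.sinh y := (Real.cosh_sub_sinh y).symm
    rw [e1, e2, Real.sinh_sub]; simp only [one_mul]; ring

lemma Hker_scale (α s t : ℝ) (hα : 0 < α) : Hker α s t = Hker 1 (α * s) (α * t) := by
  unfold Hker
  rw [mul_min_of_nonneg _ _ hα.le, mul_max_of_nonneg _ _ hα.le]; simp

/-- Exact Taylor formula for `f'''' = f''` applied to `kerA y` on `[x, x + h]`, valid when the knot
`y` does not lie in the open interval `(x, x + h)`. -/
lemma ker_transfer (y x h : ℝ) (hh : 0 ≤ h) (hy : y ≤ x ∨ x + h ≤ y) :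
    kerA y (x + h) = kerA y x + kerB y x * h + kerC y x * (Real.cosh h - 1)
        + kerD y x * (Real.sinh h - h) ∧
    kerB y (x + h) = kerB y x + kerC y x * Real.sinh h + kerD y x * (Real.cosh h - 1) ∧
    kerC y (x + h) = kerC y x * Real.cosh h + kerD y x * Real.sinh h := by
  unfold kerA kerB kerC kerD
  by_cases hyx : y ≤ x
  · rw [if_pos hyx, max_eq_left (by linarith : 0 ≤ x + h - y), max_eq_left (by linarith : 0 ≤ x - y),
      show x + h - y = (x - y) + h by ring]
    simp only [Real.sinh_add, Real.cosh_add]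
    refine ⟨by ring, by ring, by ring⟩
  · have h2 : x + h ≤ y := hy.resolve_left hyx
    rw [if_neg hyx, max_eq_right (by linarith : x + h - y ≤ 0), max_eq_right (by linarith : x - y ≤ 0)]
    simp only [Real.sinh_add, Real.cosh_add, Real.sinh_zero, Real.cosh_zero]
    refine ⟨by ring, by ring, by ring⟩

lemma sinh_lt_mul_cosh {h : ℝ} (hh : 0 < h) : Real.sinh h < h * Real.cosh h := by
  have hm : StrictMonoOn (fun x : ℝ => x * Real.cosh x - Real.sinh x) (Set.Ici 0) := by
    apply strictMonoOn_of_deriv_pos (convex_Ici 0)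
    · fun_prop
    · intro x hx
      rw [interior_Ici] at hx
      have : HasDerivAt (fun x : ℝ => x * Real.cosh x - Real.sinh x)
          (1 * Real.cosh x + x * Real.sinh x - Real.cosh x) x :=
        ((hasDerivAt_id x).mul (Real.hasDerivAt_cosh x)).sub (Real.hasDerivAt_sinh x)
      rw [this.deriv]
      have := mul_pos hx (Real.sinh_pos_iff.2 hx)
      linarith
  have := hm (Set.mem_Ici.2 le_rfl) (Set.mem_Ici.2 hh.le) hh
  simp at this; linarith

lemma cosh_bound {h : ℝ} (hh : 0 < h) : 2 * (Real.cosh h - 1) < h * Real.sinh h := by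
  have h1 := sinh_lt_mul_cosh (half_pos hh)
  have h2 := Real.sinh_pos_iff.2 (half_pos hh)
  have e : h = 2 * (h / 2) := by ring
  have e1 : Real.cosh h = Real.cosh (h/2) ^ 2 + Real.sinh (h/2) ^ 2 := by
    rw [← Real.cosh_two_mul, ← e]
  have e2 : Real.sinh h = 2 * Real.sinh (h/2) * Real.cosh (h/2) := by
    rw [← Real.sinh_two_mul, ← e]
  have e3 := Real.cosh_sq (h/2)
  rw [e1, e2]
  nlinarith [mul_lt_mul_of_pos_left h1 h2]

/-- The cone step: if a solution of `f'''' = f''` starts with `f ≥ 0`, `f' > 0`, `f'' > 0` and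
returns to zero after time `h > 0`, then from then on `f ≤ 0`, `f' < 0`, `f'' < 0`. -/
lemma cone_step (a b d q h e : ℝ) (ha : 0 ≤ a) (hb : 0 < b) (hd : 0 < d) (hh : 0 < h) (he : 0 ≤ e)
    (h0 : a + b * h + d * (Real.cosh h - 1) + q * (Real.sinh h - h) = 0) :
    a + b * (h + e) + d * (Real.cosh (h + e) - 1) + q * (Real.sinh (h + e) - (h + e)) ≤ 0 ∧
    (0 < e →
      a + b * (h + e) + d * (Real.cosh (h + e) - 1) + q * (Real.sinh (h + e) - (h + e)) < 0) ∧
    b + d * Real.sinh (h + e) + q * (Real.cosh (h + e) - 1) < 0 ∧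
    d * Real.cosh (h + e) + q * Real.sinh (h + e) < 0 := by
  have hS := Real.self_lt_sinh_iff.2 hh
  have hC := Real.one_lt_cosh.2 hh.ne'
  have k1 := sinh_lt_mul_cosh hh
  have k2 := cosh_bound hh
  have sq := Real.cosh_sq h
  have hSe := Real.self_le_sinh_iff.2 he
  have hCe := Real.one_le_cosh e
  simp only [Real.sinh_add, Real.cosh_add]
  set S := Real.sinh h
  set C := Real.cosh h
  set s := Real.sinh e
  set c := Real.cosh e
  have hSh : 0 < S - h := by linarith
  have hq : q * (S - h) = -(a + b * h + d * (C - 1)) := by linarith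
  -- values of the first, second and third derivative at time `h`
  have f1 : b + d * S + q * (C - 1) < 0 := by
    have : (b + d * S + q * (C - 1)) * (S - h) =
        -a * (C - 1) + b * (S - h * C) + d * (2 * (C - 1) - h * S) := by
      linear_combination (C - 1) * hq - d * sq
    have := mul_nonneg ha (by linarith : 0 ≤ C - 1)
    have := mul_pos hb (by linarith : 0 < h * C - S)
    have := mul_pos hd (by linarith : 0 < h * S - 2 * (C - 1))
    by_contra hcon
    have := mul_nonneg (not_lt.1 hcon) hSh.le
    nlinarith
  have f2 : d * C + q * S < 0 := by
    have : (d * C + q * S) * (S - h) = -(a * S) - b * h * S + d * (S - h * C) := by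
      linear_combination S * hq
    have := mul_nonneg ha (by linarith : 0 ≤ S)
    have := mul_pos (mul_pos hb hh) (by linarith : 0 < S)
    have := mul_pos hd (by linarith : 0 < h * C - S)
    by_contra hcon
    have := mul_nonneg (not_lt.1 hcon) hSh.le
    nlinarith
  have f3 : d * S + q * C < 0 := by
    have : (d * S + q * C) * (S - h) = -(a * C) - b * h * C + d * (C - 1 - h * S) := by
      linear_combination C * hq - d * sq
    have := mul_nonneg ha (by linarith : 0 ≤ C)
    have := mul_pos (mul_pos hb hh) (by linarith : 0 < C)
    have := mul_pos hd (by linarith : 0 < h * S - (C - 1))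
    by_contra hcon
    have := mul_nonneg (not_lt.1 hcon) hSh.le
    nlinarith
  have g0 : a + b * (h + e) + d * (C * c + S * s - 1) + q * (S * c + C * s - (h + e)) =
      (b + d * S + q * (C - 1)) * e + (d * C + q * S) * (c - 1) + (d * S + q * C) * (s - e) := by
    linear_combination h0
  have m1 := mul_nonneg (neg_pos.2 f1).le he
  have m2 := mul_nonneg (neg_pos.2 f2).le (sub_nonneg.2 hCe)
  have m3 := mul_nonneg (neg_pos.2 f3).le (sub_nonneg.2 hSe)
  have m4 := mul_nonneg (neg_pos.2 f2).le (he.trans hSe)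
  have m5 := mul_nonneg (neg_pos.2 f3).le (he.trans hSe)
  have m6 := mul_nonneg (neg_pos.2 f3).le (sub_nonneg.2 hCe)
  refine ⟨?_, ?_, ?_, ?_⟩
  · rw [g0]; linarith
  · intro he'
    have := mul_pos (neg_pos.2 f1) he'
    rw [g0]; linarith
  · nlinarith
  · nlinarith

/-- The first piece: `f = A x + q sinh x` vanishes at `x`, with `q ≠ 0`. -/
lemma cone_start (A q x e : ℝ) (hq : q ≠ 0) (hx : 0 < x) (he : 0 ≤ e)
    (h0 : A * x + q * Real.sinh x = 0) :
    0 ≤ q * (A * (x + e) + q * Real.sinh (x + e)) ∧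
    (0 < e → 0 < q * (A * (x + e) + q * Real.sinh (x + e))) ∧
    0 < q * (A + q * Real.cosh (x + e)) ∧ 0 < q * (q * Real.sinh (x + e)) := by
  have hS := Real.sinh_pos_iff.2 hx
  have k1 := sinh_lt_mul_cosh hx
  have hC := Real.cosh_pos x
  have hSe := Real.self_le_sinh_iff.2 he
  have hCe := Real.one_le_cosh e
  have hq2 : 0 < q * q := mul_self_pos.2 hq
  simp only [Real.sinh_add, Real.cosh_add]
  set S := Real.sinh x
  set C := Real.cosh x
  set s := Real.sinh e
  set c := Real.cosh e
  have hs : 0 ≤ s := he.trans hSe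
  have hA : A = -(q * S) / x := by field_simp; linarith
  have key : S / x < C := by rw [div_lt_iff₀ hx]; linarith
  have e0 : q * (A * (x + e) + q * (S * c + C * s)) =
      q * q * (S * (c - 1) + (C * (s - e)) + (C - S / x) * e) := by
    rw [hA]; field_simp; ring
  have e1 : q * (A + q * (C * c + S * s)) = q * q * ((C - S / x) + C * (c - 1) + S * s) := by
    rw [hA]; field_simp; ring
  have n1 := mul_nonneg hS.le (sub_nonneg.2 hCe)
  have n2 := mul_nonneg hC.le (sub_nonneg.2 hSe)
  have n3 := mul_nonneg (sub_pos.2 key).le he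
  have n4 := mul_nonneg hC.le (sub_nonneg.2 hCe)
  have n5 := mul_nonneg hS.le hs
  have n6 := mul_nonneg hC.le hs
  refine ⟨?_, ?_, ?_, ?_⟩
  · rw [e0]; exact mul_nonneg hq2.le (by linarith)
  · intro he'
    have := mul_pos (sub_pos.2 key) he'
    rw [e0]; exact mul_pos hq2 (by linarith)
  · rw [e1]; exact mul_pos hq2 (by linarith)
  · rw [← mul_assoc]; exact mul_pos hq2 (by nlinarith)

/-- `ker_transfer` for the spline `∑ c j * kerA (t j)`; the number `q` is its right-hand third
derivative at `x`. -/
lemma sum_transfer (n : ℕ) (c t : ℕ → ℝ) (x : ℝ) : ∃ q : ℝ, ∀ h, 0 ≤ h →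
    (∀ j < n, t j ≤ x ∨ x + h ≤ t j) →
    (∑ j ∈ Finset.range n, c j * kerA (t j) (x + h) =
      (∑ j ∈ Finset.range n, c j * kerA (t j) x) + (∑ j ∈ Finset.range n, c j * kerB (t j) x) * h
      + (∑ j ∈ Finset.range n, c j * kerC (t j) x) * (Real.cosh h - 1)
      + q * (Real.sinh h - h)) ∧
    (∑ j ∈ Finset.range n, c j * kerB (t j) (x + h) =
      (∑ j ∈ Finset.range n, c j * kerB (t j) x)
      + (∑ j ∈ Finset.range n, c j * kerC (t j) x) * Real.sinh h + q * (Real.cosh h - 1)) ∧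
    (∑ j ∈ Finset.range n, c j * kerC (t j) (x + h) =
      (∑ j ∈ Finset.range n, c j * kerC (t j) x) * Real.cosh h + q * Real.sinh h) := by
  refine ⟨∑ j ∈ Finset.range n, c j * kerD (t j) x, fun h hh hj => ?_⟩
  simp only [Finset.sum_mul, ← Finset.sum_add_distrib]
  refine ⟨?_, ?_, ?_⟩ <;> refine Finset.sum_congr rfl fun j hjn => ?_
  · rw [(ker_transfer (t j) x h hh (hj j (Finset.mem_range.1 hjn))).1]; ring
  · rw [(ker_transfer (t j) x h hh (hj j (Finset.mem_range.1 hjn))).2.1]; ring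
  · rw [(ker_transfer (t j) x h hh (hj j (Finset.mem_range.1 hjn))).2.2]; ring

/-- A spline with `n` knots `t k` that vanishes at `n` points `s k` with `s k ≤ t k ≤ s (k + 1)` is
zero. At each knot, either the spline lies, up to a sign `σ`, in the cone `f ≥ 0`, `f' > 0`,
`f'' > 0`, or it has vanished identically so far; the cone is incompatible with boundedness at
infinity. -/
lemma null_spline (n : ℕ) (c s t : ℕ → ℝ) (hs : StrictMono s) (ht : StrictMono t) (hs0 : 0 < s 0)
    (hst : ∀ k, s k ≤ t k) (hts : ∀ k, t k ≤ s (k + 1))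
    (hf : ∀ k < n, ∑ j ∈ Finset.range n, c j * kerA (t j) (s k) = 0) : ∀ k < n, c k = 0 := by
  set F0 : ℝ → ℝ := fun x => ∑ j ∈ Finset.range n, c j * kerA (t j) x with hF0
  set F1 : ℝ → ℝ := fun x => ∑ j ∈ Finset.range n, c j * kerB (t j) x with hF1
  set F2 : ℝ → ℝ := fun x => ∑ j ∈ Finset.range n, c j * kerC (t j) x with hF2
  set A := ∑ j ∈ Finset.range n, c j with hA
  set B := ∑ j ∈ Finset.range n, c j * Real.exp (-(t j)) with hB
  have G0 : ∀ x, F0 x = A * x - B * Real.sinh x +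
      ∑ j ∈ Finset.range n, c j * (Real.sinh (max (x - t j) 0) - max (x - t j) 0) := by
    intro x
    simp only [hF0, hA, hB, Finset.sum_mul, ← Finset.sum_add_distrib, ← Finset.sum_sub_distrib]
    exact Finset.sum_congr rfl fun j _ => by unfold kerA; ring
  have G1 : ∀ x, F1 x = A - B * Real.cosh x +
      ∑ j ∈ Finset.range n, c j * (Real.cosh (max (x - t j) 0) - 1) := by
    intro x
    simp only [hF1, hA, hB, Finset.sum_mul, ← Finset.sum_add_distrib, ← Finset.sum_sub_distrib]
    exact Finset.sum_congr rfl fun j _ => by unfold kerB; ring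
  have G2 : ∀ x, F2 x = - B * Real.sinh x +
      ∑ j ∈ Finset.range n, c j * Real.sinh (max (x - t j) 0) := by
    intro x
    simp only [hF2, hB, neg_mul, Finset.sum_mul, ← Finset.sum_neg_distrib, ← Finset.sum_add_distrib]
    exact Finset.sum_congr rfl fun j _ => by unfold kerC; ring
  -- on a piece right of `t k`, with all earlier coefficients zero, only one term survives
  have single : ∀ (k : ℕ) (x : ℝ) (φ : ℝ → ℝ), φ 0 = 0 → k < n → (∀ j < k, c j = 0) → t k ≤ x →
      x ≤ t (k + 1) →
      ∑ j ∈ Finset.range n, c j * φ (max (x - t j) 0) = c k * φ (x - t k) := by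
    intro k x φ hφ hk hc h1 h2
    rw [Finset.sum_eq_single_of_mem k (Finset.mem_range.2 hk), max_eq_left (by linarith)]
    intro j _ hjk
    rcases lt_or_gt_of_ne hjk with h | h
    · rw [hc j h, zero_mul]
    · have : t (k + 1) ≤ t j := ht.monotone h
      rw [max_eq_right (by linarith), hφ, mul_zero]
  have first : ∀ (x : ℝ) (φ : ℝ → ℝ), φ 0 = 0 → x ≤ t 0 →
      ∑ j ∈ Finset.range n, c j * φ (max (x - t j) 0) = 0 := by
    intro x φ hφ hx
    refine Finset.sum_eq_zero fun j _ => ?_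
    have : t 0 ≤ t j := ht.monotone (Nat.zero_le j)
    rw [max_eq_right (by linarith), hφ, mul_zero]
  have inv : ∀ k < n,
      (∃ σ : ℝ, 0 ≤ σ * F0 (t k) ∧ (s k < t k → 0 < σ * F0 (t k)) ∧ 0 < σ * F1 (t k) ∧
        0 < σ * F2 (t k)) ∨ (A = 0 ∧ B = 0 ∧ ∀ j < k, c j = 0) := by
    intro k
    induction k with
    | zero =>
      intro hn
      have z := hf 0 hn
      change F0 (s 0) = 0 at z
      rw [G0, first _ (fun x => Real.sinh x - x) (by simp) (hst 0)] at z
      by_cases hB0 : B = 0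
      · right
        refine ⟨?_, hB0, by simp⟩
        rw [hB0] at z
        simp at z
        exact z.resolve_right hs0.ne'
      · left
        have := cone_start A (-B) (s 0) (t 0 - s 0) (neg_ne_zero.2 hB0) hs0
          (by linarith [hst 0]) (by linarith)
        rw [add_sub_cancel] at this
        refine ⟨-B, ?_⟩
        rw [G0, G1, G2, first _ (fun x => Real.sinh x - x) (by simp) le_rfl,
          first _ (fun x => Real.cosh x - 1) (by simp) le_rfl,
          first _ (fun x => Real.sinh x) (by simp) le_rfl]
        obtain ⟨t1, t2, t3, t4⟩ := this
        refine ⟨by linarith, fun h => ?_, by linarith, by linarith⟩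
        have := t2 (by linarith)
        linarith
    | succ k ih =>
      intro hk
      have z := hf (k + 1) hk
      change F0 (s (k + 1)) = 0 at z
      have htk : t k < t (k + 1) := ht (Nat.lt_succ_self k)
      rcases ih (by omega) with ⟨σ, h0, h0', h1, h2⟩ | ⟨hA0, hB0, hc⟩
      · left
        -- if `s (k + 1) = t k` then `s k < t k`, where the invariant makes the spline nonzero
        have hlt : t k < s (k + 1) := by
          refine lt_of_le_of_ne (hts k) fun heq => ?_
          have := h0' (heq ▸ hs (Nat.lt_succ_self k))
          rw [heq, z, mul_zero] at this
          exact lt_irrefl _ this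
        obtain ⟨q, hq⟩ := sum_transfer n c t (t k)
        have gap : ∀ x ≤ t (k + 1), ∀ j < n, t j ≤ t k ∨ x ≤ t j := by
          intro x hx j _
          rcases le_or_gt j k with h | h
          · exact Or.inl (ht.monotone h)
          · exact Or.inr (hx.trans (ht.monotone h))
        have q1 := (hq (s (k + 1) - t k) (by linarith)
          (gap _ (by linarith [hst (k + 1)]))).1
        have q2 := hq (t (k + 1) - t k) (by linarith) (gap _ (by linarith))
        rw [add_sub_cancel] at q1 q2
        change F0 (s (k + 1)) = F0 (t k) + F1 (t k) * _ + F2 (t k) * _ + _ at q1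
        change F0 (t (k + 1)) = F0 (t k) + F1 (t k) * _ + F2 (t k) * _ + _ ∧
          F1 (t (k + 1)) = F1 (t k) + F2 (t k) * _ + _ ∧
          F2 (t (k + 1)) = F2 (t k) * _ + _ at q2
        obtain ⟨q20, q21, q22⟩ := q2
        have st := cone_step (σ * F0 (t k)) (σ * F1 (t k)) (σ * F2 (t k)) (σ * q)
          (s (k + 1) - t k) (t (k + 1) - s (k + 1)) h0 h1 h2 (by linarith)
          (by linarith [hst (k + 1)]) (by linear_combination σ * (z - q1))
        rw [show s (k + 1) - t k + (t (k + 1) - s (k + 1)) = t (k + 1) - t k by ring] at st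
        obtain ⟨t1, t2, t3, t4⟩ := st
        refine ⟨-σ, ?_⟩
        rw [q20, q21, q22]
        refine ⟨by linarith, fun h => ?_, by linarith, by linarith⟩
        have := t2 (by linarith)
        linarith
      · by_cases hck : c k = 0
        · right
          refine ⟨hA0, hB0, fun j hj => ?_⟩
          rcases Nat.lt_succ_iff_lt_or_eq.1 hj with h | h
          · exact hc j h
          · rw [h, hck]
        · left
          have hd : 0 < t (k + 1) - t k := by linarith
          have c2 : 0 < c k * c k := mul_self_pos.2 hck
          have pA : 0 < c k * F0 (t (k + 1)) := by
            rw [G0, hA0, hB0, single k _ (fun x => Real.sinh x - x) (by simp) (by omega) hc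
              htk.le le_rfl]
            have := mul_pos c2 (sub_pos.2 (Real.self_lt_sinh_iff.2 hd))
            linarith
          refine ⟨c k, pA.le, fun _ => pA, ?_, ?_⟩
          · rw [G1, hA0, hB0, single k _ (fun x => Real.cosh x - 1) (by simp) (by omega) hc
              htk.le le_rfl]
            have := mul_pos c2 (sub_pos.2 (Real.one_lt_cosh.2 hd.ne'))
            linarith
          · rw [G2, hB0, single k _ (fun x => Real.sinh x) (by simp) (by omega) hc
              htk.le le_rfl]
            have := mul_pos c2 (Real.sinh_pos_iff.2 hd)
            linarith
  rcases n with _ | m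
  · intro k hk; omega
  rcases inv m (Nat.lt_succ_self m) with ⟨σ, -, -, h1, h2⟩ | ⟨hA0, -, hc⟩
  · exfalso
    -- beyond the last knot `F0` is `const + const * exp (-x)`
    have : F1 (t m) + F2 (t m) = 0 := by
      simp only [hF1, hF2, ← Finset.sum_add_distrib]
      refine Finset.sum_eq_zero fun j hj => ?_
      have : t j ≤ t m := ht.monotone (Nat.lt_succ_iff.1 (Finset.mem_range.1 hj))
      unfold kerB kerC
      rw [max_eq_left (by linarith), ← Real.cosh_sub_sinh, Real.cosh_sub, Real.sinh_sub]
      ring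
    have : σ * F1 (t m) + σ * F2 (t m) = 0 := by rw [← mul_add, this, mul_zero]
    linarith
  · intro k hk
    rcases Nat.lt_succ_iff_lt_or_eq.1 hk with h | h
    · exact hc k h
    · rw [hA, Finset.sum_range_succ, Finset.sum_eq_zero fun j hj => hc j (Finset.mem_range.1 hj),
        zero_add] at hA0
      rw [h, hA0]

lemma det_ne (n : ℕ) (s t : ℕ → ℝ) (hs : StrictMono s) (ht : StrictMono t) (hs0 : 0 < s 0)
    (hst : ∀ k, s k ≤ t k) (hts : ∀ k, t k ≤ s (k + 1)) :
    (Matrix.of fun i j : Fin n => kerA (t j) (s i)).det ≠ 0 := by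
  intro hdet
  obtain ⟨v, hv, hMv⟩ := Matrix.exists_mulVec_eq_zero_iff.2 hdet
  apply hv
  set c : ℕ → ℝ := fun k => if h : k < n then v ⟨k, h⟩ else 0 with hc
  have := null_spline n c s t hs ht hs0 hst hts (by
    intro k hk
    have := congrFun hMv ⟨k, hk⟩
    simp only [Matrix.mulVec, dotProduct, Matrix.of_apply, Pi.zero_apply] at this
    rw [Finset.sum_range, ← this]
    refine Finset.sum_congr rfl fun j _ => ?_
    simp [hc, mul_comm])
  funext k
  have h := this k k.2
  simpa [hc] using h

lemma pos_of_ne_zero_on {S : Set ℝ} (hS : IsPreconnected S) {f : ℝ → ℝ} (hf : ContinuousOn f S)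
    (h0 : ∀ x ∈ S, f x ≠ 0) {a b : ℝ} (ha : a ∈ S) (hb : b ∈ S) (hfa : 0 < f a) : 0 < f b := by
  by_contra hcon
  obtain ⟨x, hx, hx0⟩ := hS.intermediate_value hb ha hf ⟨not_lt.1 hcon, hfa.le⟩
  exact h0 x hx hx0

lemma continuous_kerA : Continuous fun p : ℝ × ℝ => kerA p.1 p.2 := by
  unfold kerA
  fun_prop

open Filter Topology in
lemma kerA_tendsto_left (x : ℝ) : Tendsto (fun y => kerA y x) atTop (𝓝 x) := by
  have h : Tendsto (fun y => x - Real.exp (-y) * Real.sinh x) atTop (𝓝 (x - 0 * Real.sinh x)) :=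
    tendsto_const_nhds.sub ((Real.tendsto_exp_neg_atTop_nhds_zero).mul_const _)
  rw [zero_mul, sub_zero] at h
  refine h.congr' ?_
  filter_upwards [eventually_ge_atTop x] with y hy
  unfold kerA
  rw [max_eq_right (by linarith)]
  simp

open Filter Topology in
lemma kerA_tendsto_right (y : ℝ) : Tendsto (fun x => kerA y x) atTop (𝓝 y) := by
  have h : Tendsto (fun x => y - Real.exp (-x) * Real.sinh y) atTop (𝓝 (y - 0 * Real.sinh y)) :=
    tendsto_const_nhds.sub ((Real.tendsto_exp_neg_atTop_nhds_zero).mul_const _)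
  rw [zero_mul, sub_zero] at h
  refine h.congr' ?_
  filter_upwards [eventually_ge_atTop y] with x hx
  rw [← Hker_one]
  unfold Hker
  rw [min_eq_right hx, max_eq_left hx]; simp

open Filter Topology in
lemma kerA_tendsto_diag : Tendsto (fun x => x⁻¹ * kerA x x) atTop (𝓝 1) := by
  have e : Tendsto (fun x : ℝ => Real.exp (-(2 * x))) atTop (𝓝 0) :=
    Real.tendsto_exp_neg_atTop_nhds_zero.comp (tendsto_id.const_mul_atTop (by norm_num))
  have h : Tendsto (fun x : ℝ => 1 - x⁻¹ * ((1 - Real.exp (-(2 * x))) / 2)) atTop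
      (𝓝 (1 - 0 * ((1 - 0) / 2))) :=
    tendsto_const_nhds.sub (tendsto_inv_atTop_zero.mul ((tendsto_const_nhds.sub e).div_const 2))
  rw [zero_mul, sub_zero] at h
  refine h.congr' ?_
  filter_upwards [eventually_gt_atTop 0] with x hx
  unfold kerA
  have e3 : Real.exp (-x) * Real.sinh x = (1 - Real.exp (-(2 * x))) / 2 := by
    rw [Real.sinh_eq, show -(2 * x) = -x + -x by ring, Real.exp_add]
    have : Real.exp (-x) * Real.exp x = 1 := by rw [← Real.exp_add]; simp
    linear_combination this / 2
  rw [e3]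
  simp
  field_simp

open Filter Topology in
/-- By induction on the number of points: the determinant does not vanish while the last point `x`
moves to infinity, and there it is asymptotic to `x` times the determinant for the other points. -/
lemma det_pos_principal (n : ℕ) : ∀ (U : ℕ → ℝ), StrictMono U → 0 < U 0 →
    0 < (Matrix.of fun i j : Fin n => kerA (U j) (U i)).det := by
  induction n with
  | zero => intro U _ _; simp
  | succ n ih =>
    intro U hU hU0
    -- move the last point `U n` to `x`
    set V : ℝ → ℕ → ℝ := fun x k => if k < n then U k else x + (k - n : ℝ) with hV
    set D : ℝ → ℝ := fun x => (Matrix.of fun i j : Fin (n + 1) => kerA (V x j) (V x i)).det with hD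
    have hVc : ∀ k, Continuous fun x => V x k := by
      intro k
      simp only [hV]
      split_ifs <;> fun_prop
    have hDc : Continuous D := by
      refine Continuous.matrix_det (continuous_matrix fun i j => ?_)
      exact continuous_kerA.comp ((hVc j).prodMk (hVc i))
    have hVlt : ∀ x (k : ℕ), k < n → V x k = U k := fun x k hk => by simp [hV, hk]
    have hVn : ∀ x, V x n = x := fun x => by simp [hV]
    have hVm : ∀ x, U n ≤ x → StrictMono (V x) := by
      intro x hx
      refine strictMono_nat_of_lt_succ fun k => ?_
      simp only [hV]
      split_ifs with h1 h2 h2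
      · exact hU (Nat.lt_succ_self k)
      · have : U k < U n := hU h1
        have : (n : ℝ) ≤ ((k + 1 : ℕ) : ℝ) := by exact_mod_cast not_lt.1 h2
        linarith
      · omega
      · push_cast; linarith
    have hV0 : ∀ x, U n ≤ x → 0 < V x 0 := by
      intro x hx
      rcases Nat.eq_zero_or_pos n with h | h
      · subst h; rw [hVn]; linarith
      · rw [hVlt x 0 h]; exact hU0
    have hDne : ∀ x ∈ Set.Ici (U n), D x ≠ 0 := fun x hx =>
      det_ne (n + 1) (V x) (V x) (hVm x hx) (hVm x hx) (hV0 x hx) (fun _ => le_rfl)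
        (fun k => (hVm x hx).monotone (Nat.le_succ k))
    have hlim : Tendsto (fun x => x⁻¹ * D x) atTop
        (𝓝 (Matrix.of fun i j : Fin n => kerA (U j) (U i)).det) := by
      -- `r x` divides the last row by `x`, and `L` is the entrywise limit of the scaled matrices
      set r : ℝ → Fin (n + 1) → ℝ := fun x => Fin.snoc (fun _ => 1) x⁻¹ with hr
      set L : Matrix (Fin (n + 1)) (Fin (n + 1)) ℝ := Matrix.of fun i j =>
        Fin.lastCases (motive := fun _ => ℝ) (Fin.lastCases (motive := fun _ => ℝ) 1 (fun _ => 0) j)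
          (fun i' => Fin.lastCases (motive := fun _ => ℝ) (U i') (fun j' => kerA (U j') (U i')) j) i
        with hL
      have hLdet : L.det = (Matrix.of fun i j : Fin n => kerA (U j) (U i)).det := by
        rw [Matrix.det_succ_row L (Fin.last n), Finset.sum_eq_single_of_mem (Fin.last n)
          (Finset.mem_univ _)]
        · have : L.submatrix (Fin.last n).succAbove (Fin.last n).succAbove =
              Matrix.of fun i j : Fin n => kerA (U j) (U i) := by
            ext i j
            simp [hL]
          rw [this]
          simp [hL, ← two_mul]
        · intro j _ hj
          obtain ⟨j', rfl⟩ := Fin.exists_castSucc_eq.2 hj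
          simp [hL]
      have hDr : ∀ x, x⁻¹ * D x =
          (Matrix.of fun i j : Fin (n + 1) => r x i * kerA (V x j) (V x i)).det := by
        intro x
        have := Matrix.det_mul_column (r x)
          (Matrix.of fun i j : Fin (n + 1) => kerA (V x j) (V x i))
        simp only [Matrix.of_apply] at this
        rw [this, Fin.prod_univ_castSucc]
        simp [hr, hD]
      simp_rw [hDr]
      rw [← hLdet]
      have hdet : Continuous fun M : Matrix (Fin (n + 1)) (Fin (n + 1)) ℝ => M.det :=
        Continuous.matrix_det continuous_id
      refine (hdet.tendsto L).comp ?_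
      refine tendsto_pi_nhds.2 fun i => tendsto_pi_nhds.2 fun j => ?_
      induction i using Fin.lastCases with
      | last =>
        induction j using Fin.lastCases with
        | last => simpa [hr, hL, hVn] using kerA_tendsto_diag
        | cast j =>
          have := tendsto_inv_atTop_zero.mul (kerA_tendsto_right (U j))
          rw [zero_mul] at this
          simpa [hr, hL, hVn, hVlt] using this
      | cast i =>
        induction j using Fin.lastCases with
        | last => simpa [hr, hL, hVn, hVlt] using kerA_tendsto_left (U i)
        | cast j => simp [hr, hL, hVlt]
    have hev := (hlim.eventually (lt_mem_nhds (ih U hU hU0))).and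
      ((eventually_ge_atTop (U n)).and (eventually_gt_atTop 0))
    obtain ⟨x, hx1, hx2, hx3⟩ := hev.exists
    have hDx : 0 < D x := (mul_pos_iff_of_pos_left (inv_pos.2 hx3)).1 hx1
    have := pos_of_ne_zero_on isPreconnected_Ici hDc.continuousOn hDne hx2
      (Set.self_mem_Ici) hDx
    have hVU : ∀ k : Fin (n + 1), V (U n) k = U k := by
      intro k
      rcases Nat.lt_succ_iff_lt_or_eq.1 k.2 with h | h
      · exact hVlt _ _ h
      · rw [h, hVn]
    simpa [hD, hVU] using this

/-- Moving the knots `U k`, `k ≥ i`, linearly to `U (k + 1)` keeps knots and nodes interlaced, so the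
minor keeps the sign of the principal determinant. -/
lemma minor_pos (n i : ℕ) (U : ℕ → ℝ) (hU : StrictMono U) (hU0 : 0 < U 0) :
    0 < (Matrix.of fun a b : Fin n =>
      kerA (U (if (b : ℕ) < i then b else b + 1)) (U a)).det := by
  set T : ℝ → ℕ → ℝ := fun θ k => if k < i then U k else (1 - θ) * U k + θ * U (k + 1) with hT
  set D : ℝ → ℝ := fun θ => (Matrix.of fun a b : Fin n => kerA (T θ b) (U a)).det with hD
  have hstep : ∀ k, U k < U (k + 1) := fun k => hU (Nat.lt_succ_self k)
  have hTc : ∀ k, Continuous fun x => T x k := by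
    intro k
    simp only [hT]
    split_ifs <;> fun_prop
  have hDc : Continuous D := by
    refine Continuous.matrix_det (continuous_matrix fun a b => ?_)
    exact continuous_kerA.comp ((hTc b).prodMk continuous_const)
  have h1 : ∀ θ ∈ Set.Icc (0 : ℝ) 1, ∀ k, U k ≤ T θ k := by
    intro θ hθ k
    simp only [hT]
    split_ifs
    · exact le_rfl
    · nlinarith [hstep k, hθ.1]
  have h2 : ∀ θ ∈ Set.Icc (0 : ℝ) 1, ∀ k, T θ k ≤ U (k + 1) := by
    intro θ hθ k
    simp only [hT]
    split_ifs
    · exact (hstep k).le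
    · nlinarith [hstep k, hθ.2]
  have h3 : ∀ θ ∈ Set.Icc (0 : ℝ) 1, StrictMono (T θ) := by
    intro θ hθ
    refine strictMono_nat_of_lt_succ fun k => ?_
    by_cases hk : k < i
    · have : T θ k = U k := by simp [hT, hk]
      rw [this]
      exact (hstep k).trans_le (h1 θ hθ (k + 1))
    · have hk' : ¬ k + 1 < i := by omega
      simp only [hT, if_neg hk, if_neg hk']
      rcases hθ.1.eq_or_lt with h | h
      · subst h; linarith [hstep k]
      · have a1 := mul_le_mul_of_nonneg_left (hstep k).le (sub_nonneg.2 hθ.2)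
        have a2 := mul_lt_mul_of_pos_left (hstep (k + 1)) h
        linarith
  have hpos : 0 < D 0 := by
    have : ∀ k, T 0 k = U k := by intro k; simp [hT]
    simpa [hD, this] using det_pos_principal n U hU hU0
  have := pos_of_ne_zero_on isPreconnected_Icc hDc.continuousOn
    (fun θ hθ => det_ne n U (T θ) hU (h3 θ hθ) hU0 (h1 θ hθ) (h2 θ hθ))
    (Set.left_mem_Icc.2 zero_le_one) (Set.right_mem_Icc.2 zero_le_one) hpos
  have e : ∀ k, T 1 k = U (if k < i then k else k + 1) := by
    intro k
    simp only [hT]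
    split_ifs <;> simp
  simpa only [hD, e] using this

/-- Alternating signs in the last column of the precision matrix: for `α > 0` and points
`0 < u₁ < ⋯ < u_{N+1}`, let `𝐁` be the inverse of the matrix `(H(u_j,u_k))_{j,k}`.
With 0-indexed `i < N` (i.e. 1-indexed `i ∈ {1,…,N}`), the entry `𝐁_{i, N+1}` is
nonzero with sign `(−1)^{N+1−i}` (1-indexed), i.e. `(−1)^{N−i} 𝐁_{i, last} > 0`;
in particular the entries above the diagonal in the last column alternate in sign,
with `𝐁_{N, N+1} < 0`. -/
theorem wilson_H_precision_matrix_last_column_signs (α : ℝ) (hα : 0 < α)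
    (N : ℕ) (hN : 1 ≤ N)
    (u : Fin (N + 1) → ℝ) (hu0 : ∀ j, 0 < u j) (hu : StrictMono u)
    (i : Fin (N + 1)) (hi : (i : ℕ) < N) :
    0 < (-1 : ℝ) ^ (N - (i : ℕ)) *
      (Matrix.of fun j k : Fin (N + 1) => Hker α (u j) (u k))⁻¹ i (Fin.last N) := by
  -- rescale to `α = 1` and extend to an infinite strictly increasing sequence
  set U : ℕ → ℝ := fun k =>
    if h : k < N + 1 then α * u ⟨k, h⟩ else α * u (Fin.last N) + (k - N : ℝ) with hUdef
  have hUu : ∀ k : Fin (N + 1), U k = α * u k := fun k => by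
    simp only [hUdef, dif_pos k.2]
  have hU : StrictMono U := by
    refine strictMono_nat_of_lt_succ fun k => ?_
    simp only [hUdef]
    split_ifs with h1 h2 h2
    · exact mul_lt_mul_of_pos_left (hu (by simp [Fin.lt_def])) hα
    · have hk : k = N := by omega
      subst hk
      have : (⟨k, h1⟩ : Fin (k + 1)) = Fin.last k := rfl
      rw [this]; push_cast; linarith
    · omega
    · push_cast; linarith
  have hU0 : 0 < U 0 := by
    have := hUu 0
    rw [Fin.val_zero] at this
    rw [this]; exact mul_pos hα (hu0 0)
  have hM : (Matrix.of fun j k : Fin (N + 1) => Hker α (u j) (u k)) =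
      Matrix.of fun j k : Fin (N + 1) => kerA (U k) (U j) := by
    ext j k
    simp only [Matrix.of_apply]
    rw [Hker_scale _ _ _ hα, Hker_one, hUu, hUu]
  rw [hM]
  have hdet := det_pos_principal (N + 1) U hU hU0
  have hmin := minor_pos N i U hU hU0
  rw [Matrix.inv_def, Matrix.smul_apply, Matrix.adjugate_fin_succ_eq_det_submatrix,
    Ring.inverse_eq_inv', smul_eq_mul]
  have hsub : (Matrix.of fun j k : Fin (N + 1) => kerA (U k) (U j)).submatrix
      (Fin.last N).succAbove i.succAbove = Matrix.of fun a b : Fin N =>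
      kerA (U (if (b : ℕ) < i then b else b + 1)) (U a) := by
    ext a b
    have : ((i.succAbove b : Fin (N + 1)) : ℕ) = if (b : ℕ) < i then (b : ℕ) else b + 1 := by
      simp only [Fin.succAbove, Fin.lt_def, Fin.val_castSucc]
      split_ifs <;> simp
    simp [this]
  rw [hsub]
  have hsign : (-1 : ℝ) ^ (N - (i : ℕ)) * (-1) ^ (((Fin.last N : Fin (N + 1)) : ℕ) + (i : ℕ)) = 1 := by
    rw [← pow_add, Fin.val_last, show N - (i : ℕ) + (N + i) = 2 * N by omega, pow_mul]
    simp
  have := mul_pos (inv_pos.2 hdet) hmin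
  calc (0 : ℝ) < _ := this
    _ = 1 * _ := (one_mul _).symm
    _ = ((-1 : ℝ) ^ (N - (i : ℕ)) * (-1) ^ (((Fin.last N : Fin (N + 1)) : ℕ) + (i : ℕ))) * _ := by
        rw [hsign]
    _ = _ := by ring
end

section
/- Let α > 0, ω ∈ ℝ, N ≥ 1, tenors 0 < u₁ < ⋯ < u_N, and prices p ∈ ℝ^N, and let P be the associated Smith–Wilson discount function. Set S := Σⱼ e^{-ω uⱼ} ζⱼ sinh(α uⱼ) and κ := (1 + Σⱼ e^{-ω uⱼ} ζⱼ α uⱼ) / S, and assume S ≠ 0. Then for every t > u_N with P(t) ≠ 0, the forward intensity f(t) := −P'(t)/P(t) satisfies f(t) − ω = α / (1 − κ e^{αt}). -/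
/-- Beyond every tenor the kernel separates: `min` is the tenor and `max` is the time, so `W(t,v)`
is `e^{-ωt}` times an affine function of `e^{-αt}`. -/
theorem Wker_of_lt (α ω : ℝ) {t v : ℝ} (h : v < t) :
    Wker α ω t v = Real.exp (-(ω * t)) * (Real.exp (-(ω * v)) *
      (α * v - Real.exp (-(α * t)) * Real.sinh (α * v))) := by
  have e : -(ω * (t + v)) = -(ω * t) + -(ω * v) := by ring
  rw [Wker, min_eq_right h.le, max_eq_left h.le, e, Real.exp_add, mul_assoc]

/-- Forward intensity of the Smith–Wilson discount function beyond the Last Liquid Point: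
with `ζ = 𝐖⁻¹(p − q)`, `P(t) = e^{-ωt} + Σⱼ ζⱼ W(t,uⱼ)`,
`S = Σⱼ e^{-ωuⱼ} ζⱼ sinh(α uⱼ) ≠ 0` and `κ = (1 + Σⱼ e^{-ωuⱼ} ζⱼ α uⱼ)/S`, for every
`t > u_N` (i.e. `t > uᵢ` for all `i`) with `P(t) ≠ 0`, the forward intensity
`f(t) = −P'(t)/P(t)` satisfies `f(t) − ω = α / (1 − κ e^{αt})`. -/
theorem smith_wilson_forward_intensity (α ω : ℝ) (hα : 0 < α)
    (N : ℕ) (hN : 1 ≤ N)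
    (u : Fin N → ℝ) (hu0 : ∀ i, 0 < u i) (hu : StrictMono u)
    (p ζ : Fin N → ℝ)
    (hζ : ζ = (Matrix.of fun i j : Fin N => Wker α ω (u i) (u j))⁻¹.mulVec
        (p - fun i => Real.exp (-(ω * u i))))
    (P : ℝ → ℝ)
    (hP : P = fun t => Real.exp (-(ω * t)) + ∑ j, ζ j * Wker α ω t (u j))
    (S κ : ℝ)
    (hS : S = ∑ j, Real.exp (-(ω * u j)) * ζ j * Real.sinh (α * u j))
    (hS0 : S ≠ 0)
    (hκ : κ = (1 + ∑ j, Real.exp (-(ω * u j)) * ζ j * (α * u j)) / S)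
    (t : ℝ) (ht : ∀ i, u i < t) (hPt : P t ≠ 0) :
    -(deriv P t) / P t - ω = α / (1 - κ * Real.exp (α * t)) := by
  have hκS : κ * S = 1 + ∑ j, Real.exp (-(ω * u j)) * ζ j * (α * u j) := by
    rw [hκ, div_mul_cancel₀ _ hS0]
  have hform : ∀ s, (∀ i, u i < s) →
      P s = Real.exp (-(ω * s)) * (κ * S - Real.exp (-(α * s)) * S) := by
    intro s hs
    have hsum : ∑ j, ζ j * Wker α ω s (u j) = Real.exp (-(ω * s)) *
        (∑ j, Real.exp (-(ω * u j)) * ζ j * (α * u j) - Real.exp (-(α * s)) * S) := by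
      rw [hS, Finset.mul_sum, ← Finset.sum_sub_distrib, Finset.mul_sum]
      refine Finset.sum_congr rfl fun j _ => ?_
      rw [Wker_of_lt α ω (hs j)]
      ring
    rw [hP, hκS]
    simp only [hsum]
    ring
  have hev : P =ᶠ[nhds t]
      fun s => Real.exp (-(ω * s)) * (κ * S - Real.exp (-(α * s)) * S) := by
    have : ∀ᶠ s in nhds t, ∀ i, u i < s :=
      Filter.eventually_all.2 fun i => lt_mem_nhds (ht i)
    exact this.mono hform
  have hexp : ∀ c : ℝ,
      HasDerivAt (fun s => Real.exp (-(c * s))) (Real.exp (-(c * t)) * (-(c * 1))) t :=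
    fun c => (((hasDerivAt_id t).const_mul c).neg).exp
  have hderiv := (((hexp ω).mul (((hexp α).mul_const S).const_sub (κ * S))).congr_of_eventuallyEq
    hev).deriv
  have hPv := hform t ht
  have hinv : Real.exp (α * t) = (Real.exp (-(α * t)))⁻¹ := by
    rw [Real.exp_neg, inv_inv]
  have hω := Real.exp_ne_zero (-(ω * t))
  have hE := Real.exp_ne_zero (-(α * t))
  rw [hderiv, hinv]
  rw [hPv] at hPt ⊢
  generalize Real.exp (-(ω * t)) = A at *
  generalize Real.exp (-(α * t)) = E at *
  have hd : κ - E ≠ 0 := by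
    intro h
    apply hPt
    rw [← sub_mul, h]
    ring
  have hd' : E - κ ≠ 0 := by
    rw [← neg_sub]
    exact neg_ne_zero.2 hd
  have h1 : 1 - κ * E⁻¹ = (E - κ) / E := by field_simp
  have h2 : A * (κ * S - E * S) = -(A * S * (E - κ)) := by ring
  rw [h1, h2]
  field_simp
  ring
end

section
/- Let α > 0, ω ∈ ℝ, N ≥ 1, tenors 0 < u₁ < ⋯ < u_N, and prices p ∈ ℝ^N, and let P be the associated Smith–Wilson discount function. Set S := Σⱼ e^{-ω uⱼ} ζⱼ sinh(α uⱼ) and κ := (1 + Σⱼ e^{-ω uⱼ} ζⱼ α uⱼ) / S, and assume S ≠ 0. Then for every t ≥ u_N: κ e^{αt} = 1 if and only if P(t) = 0. (Consequently, the EIOPA convergence criterion function α/|1 − κ e^{α·CP}| has a singularity at a given α exactly when the Smith–Wilson discount factor at the Convergence Point CP vanishes for that α.) -/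
/-- Singularities of the convergence criterion and vanishing discount factors: with
`ζ = 𝐖⁻¹(p − q)`, `P(t) = e^{-ωt} + Σⱼ ζⱼ W(t,uⱼ)`,
`S = Σⱼ e^{-ωuⱼ} ζⱼ sinh(α uⱼ) ≠ 0` and `κ = (1 + Σⱼ e^{-ωuⱼ} ζⱼ α uⱼ)/S`, for every
`t ≥ u_N` (i.e. `t ≥ uᵢ` for all `i`): `κ e^{αt} = 1` if and only if `P(t) = 0`. -/
theorem smith_wilson_singularity_iff_zero_discount (α ω : ℝ) (hα : 0 < α)
    (N : ℕ) (hN : 1 ≤ N)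
    (u : Fin N → ℝ) (hu0 : ∀ i, 0 < u i) (hu : StrictMono u)
    (p ζ : Fin N → ℝ)
    (hζ : ζ = (Matrix.of fun i j : Fin N => Wker α ω (u i) (u j))⁻¹.mulVec
        (p - fun i => Real.exp (-(ω * u i))))
    (P : ℝ → ℝ)
    (hP : P = fun t => Real.exp (-(ω * t)) + ∑ j, ζ j * Wker α ω t (u j))
    (S κ : ℝ)
    (hS : S = ∑ j, Real.exp (-(ω * u j)) * ζ j * Real.sinh (α * u j))
    (hS0 : S ≠ 0)
    (hκ : κ = (1 + ∑ j, Real.exp (-(ω * u j)) * ζ j * (α * u j)) / S)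
    (t : ℝ) (ht : ∀ i, u i ≤ t) :
    κ * Real.exp (α * t) = 1 ↔ P t = 0 := by
  -- Past the last tenor, `min t uⱼ = uⱼ` and `max t uⱼ = t`, so `P t` factors.
  have key : P t = Real.exp (-(ω * t)) * Real.exp (-(α * t)) * S *
      (κ * Real.exp (α * t) - 1) := by
    have hker : ∀ j, ζ j * Wker α ω t (u j) =
        Real.exp (-(ω * t)) * (Real.exp (-(ω * u j)) * ζ j * (α * u j)) -
          Real.exp (-(ω * t)) * Real.exp (-(α * t)) *
            (Real.exp (-(ω * u j)) * ζ j * Real.sinh (α * u j)) := by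
      intro j
      rw [Wker, min_eq_right (ht j), max_eq_left (ht j), mul_add, neg_add, Real.exp_add]
      ring
    have hκS : κ * S = 1 + ∑ j, Real.exp (-(ω * u j)) * ζ j * (α * u j) := by
      rw [hκ, div_mul_cancel₀ _ hS0]
    have hexp : Real.exp (-(α * t)) * Real.exp (α * t) = 1 := by
      rw [← Real.exp_add, neg_add_cancel, Real.exp_zero]
    have hPt : P t = Real.exp (-(ω * t)) * (κ * S) -
        Real.exp (-(ω * t)) * Real.exp (-(α * t)) * S := by
      rw [hκS, hP]
      simp only [hker]
      rw [Finset.sum_sub_distrib, ← Finset.mul_sum, ← Finset.mul_sum, ← hS]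
      ring
    rw [hPt]
    linear_combination (-(Real.exp (-(ω * t)) * S * κ)) * hexp
  have hne : Real.exp (-(ω * t)) * Real.exp (-(α * t)) * S ≠ 0 :=
    mul_ne_zero (mul_ne_zero (Real.exp_ne_zero _) (Real.exp_ne_zero _)) hS0
  rw [key, mul_eq_zero, or_iff_right hne, sub_eq_zero]
end
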